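/- Let s ∈ (3/2, 2) and α = s − 3/2. There is a constant 0 < C < ∞, depending only on s, such that for all γ ∈ 𝓜 and all u ∈ H^s(𝕋,ℝⁿ): [u]²_{H^s(γ)} ≤ 32·B¹_γ(u,u) + 128·B²_γ(u,u) + C·L(γ)·E(γ)^{(α+1)/α}·⟨u,u⟩_{H¹(γ)}; moreover ‖u‖_{H^s(γ)} ≤ √(32 + C·L(γ)·E(γ)^{(α+1)/α}) · √(G_γ(u,u)). -/

import Mathlib

open MeasureTheory Real Filter Set
open scoped ENNReal Topology RealInnerProductSpace

noncomputable section

/-- Euclidean space `ℝⁿ`. -/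
abbrev En (n : ℕ) : Type := EuclideanSpace ℝ (Fin n)

/-- A fundamental domain for the circle `𝕋 = ℝ/ℤ`. -/
def I01 : Set ℝ := Set.Ico (0 : ℝ) 1

/-- The intrinsic distance on `𝕋 = ℝ/ℤ`, expressed for real representatives. -/
def dT (x y : ℝ) : ℝ := ⨅ k : ℤ, |x - y - (k : ℝ)|

/-- Supremum norm of a (periodic) function on the circle. -/
def supNorm {E : Type*} [NormedAddCommGroup E] (f : ℝ → E) : ℝ := ⨆ x : ℝ, ‖f x‖

/-- The squared Gagliardo seminorm `[v]_{H^σ}²` of a function on the circle, valued in `[0,∞]`. -/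
def gagliardoSqE {E : Type*} [NormedAddCommGroup E] (σ : ℝ) (v : ℝ → E) : ℝ≥0∞ :=
  ∫⁻ x in I01, ∫⁻ y in I01, ENNReal.ofReal (‖v y - v x‖ ^ 2 / dT x y ^ (2 * σ + 1))

/-- Membership in the Sobolev–Slobodeckij space `H^s(𝕋, ℝⁿ)`; for `s ∈ (3/2,2)` such
functions have a `C¹` representative, which we take as the defining data. -/
def InHs {n : ℕ} (s : ℝ) (u : ℝ → En n) : Prop :=
  Function.Periodic u 1 ∧ ContDiff ℝ 1 u ∧ gagliardoSqE (s - 1) (deriv u) < ⊤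

/-- The squared `H^s` norm `‖u‖²_{L²} + ‖u'‖²_{L²} + [u']²_{H^{s-1}}`. -/
def HsNormSq {n : ℕ} (s : ℝ) (u : ℝ → En n) : ℝ :=
  (∫ x in I01, ‖u x‖ ^ 2) + (∫ x in I01, ‖deriv u x‖ ^ 2) +
    (gagliardoSqE (s - 1) (deriv u)).toReal

/-- The `H^s` norm. -/
def HsNorm {n : ℕ} (s : ℝ) (u : ℝ → En n) : ℝ := Real.sqrt (HsNormSq s u)

/-- The `H^s` inner product. -/
def HsInner {n : ℕ} (s : ℝ) (u v : ℝ → En n) : ℝ :=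
  (∫ x in I01, ⟪u x, v x⟫) + (∫ x in I01, ⟪deriv u x, deriv v x⟫) +
    ∫ x in I01, ∫ y in I01,
      ⟪deriv u y - deriv u x, deriv v y - deriv v x⟫ / dT x y ^ (2 * (s - 1) + 1)

/-- The manifold `𝓜` of embedded closed curves of class `H^s`: injective (on the circle)
immersions. -/
def InM {n : ℕ} (s : ℝ) (γ : ℝ → En n) : Prop :=
  InHs s γ ∧ Set.InjOn γ I01 ∧ ∀ x, deriv γ x ≠ 0

/-- The length `L(γ)`. -/
def arcLen {n : ℕ} (γ : ℝ → En n) : ℝ := ∫ x in I01, ‖deriv γ x‖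

/-- The arc-length distance `d_γ(x,y)`: the length of the shorter of the two arcs of `γ`
between `x` and `y`. -/
def arcDist {n : ℕ} (γ : ℝ → En n) (x y : ℝ) : ℝ :=
  ⨅ k : ℤ, |∫ t in x..(y + (k : ℝ)), ‖deriv γ t‖|

/-- Derivative with respect to arc length, `D_γ u = u' / |γ'|`. -/
def Dg {n : ℕ} (γ u : ℝ → En n) (x : ℝ) : En n := ‖deriv γ x‖⁻¹ • deriv u x

/-- `𝒟_γ u (x)`, the pointwise linear map `w ↦ |γ'(x)|⁻² ⟪γ'(x), w⟫ u'(x)`. -/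
def DDg {n : ℕ} (γ u : ℝ → En n) (x : ℝ) (w : En n) : En n :=
  ((‖deriv γ x‖ ^ 2)⁻¹ * ⟪deriv γ x, w⟫) • deriv u x

/-- The operator `R^s_γ`. -/
def Rop {n : ℕ} (s : ℝ) (γ u : ℝ → En n) (x y : ℝ) : En n :=
  (‖γ y - γ x‖ ^ s)⁻¹ • (u y - u x - DDg γ u x (γ y - γ x))

/-- Density of the measure `μ_γ` with respect to `λ ⊗ λ` on `𝕋 × 𝕋`. -/
def muW {n : ℕ} (γ : ℝ → En n) (x y : ℝ) : ℝ :=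
  ‖deriv γ x‖ * ‖deriv γ y‖ / ‖γ y - γ x‖

/-- Density of the measure `ν_γ` with respect to `λ ⊗ λ` on `𝕋 × 𝕋`. -/
def nuW {n : ℕ} (γ : ℝ → En n) (x y : ℝ) : ℝ :=
  ‖deriv γ x‖ * ‖deriv γ y‖ / arcDist γ x y

/-- The tangent-point energy, valued in `[0,∞]`. -/
def EtpE {n : ℕ} (s : ℝ) (γ : ℝ → En n) : ℝ≥0∞ :=
  ∫⁻ x in I01, ∫⁻ y in I01, ENNReal.ofReal (‖Rop s γ γ x y‖ ^ 2 * muW γ x y)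

/-- The tangent-point energy, real-valued (finite on `𝓜`). -/
def Etp {n : ℕ} (s : ℝ) (γ : ℝ → En n) : ℝ := (EtpE s γ).toReal

/-- `‖R^s_γ u‖²_{L²(ν_γ)}`, valued in `[0,∞]`. -/
def RnuSqE {n : ℕ} (s : ℝ) (γ u : ℝ → En n) : ℝ≥0∞ :=
  ∫⁻ x in I01, ∫⁻ y in I01, ENNReal.ofReal (‖Rop s γ u x y‖ ^ 2 * nuW γ x y)

/-- `‖R^s_γ u‖²_{L²(ν_γ)}`, real-valued. -/
def RnuSq {n : ℕ} (s : ℝ) (γ u : ℝ → En n) : ℝ := (RnuSqE s γ u).toReal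

/-- The squared `γ`-dependent seminorm `[u]²_{H^s(γ)}`, valued in `[0,∞]`. -/
def gagGammaSqE {n : ℕ} (s : ℝ) (γ u : ℝ → En n) : ℝ≥0∞ :=
  ∫⁻ x in I01, ∫⁻ y in I01,
    ENNReal.ofReal (‖Dg γ u y - Dg γ u x‖ ^ 2 / arcDist γ x y ^ (2 * (s - 1)) * nuW γ x y)

/-- The squared `γ`-dependent seminorm `[u]²_{H^s(γ)}`, real-valued. -/
def gagGammaSq {n : ℕ} (s : ℝ) (γ u : ℝ → En n) : ℝ := (gagGammaSqE s γ u).toReal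

/-- The inner product `⟨u,v⟩_{L²(γ)}`. -/
def innerL2g {n : ℕ} (γ u v : ℝ → En n) : ℝ := ∫ x in I01, ⟪u x, v x⟫ * ‖deriv γ x‖

/-- The inner product `⟨u,v⟩_{H¹(γ)}`. -/
def innerH1g {n : ℕ} (γ u v : ℝ → En n) : ℝ :=
  ∫ x in I01, ⟪Dg γ u x, Dg γ v x⟫ * ‖deriv γ x‖

/-- The squared `γ`-dependent norm `‖u‖²_{H^s(γ)}`. -/
def HsGammaNormSq {n : ℕ} (s : ℝ) (γ u : ℝ → En n) : ℝ :=
  innerL2g γ u u + innerH1g γ u u + gagGammaSq s γ u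

/-- The `γ`-dependent norm `‖u‖_{H^s(γ)}`. -/
def HsGammaNorm {n : ℕ} (s : ℝ) (γ u : ℝ → En n) : ℝ := Real.sqrt (HsGammaNormSq s γ u)

/-- The bilinear form `B¹_γ`. -/
def B1 {n : ℕ} (s : ℝ) (γ u v : ℝ → En n) : ℝ :=
  ∫ x in I01, ∫ y in I01, ⟪Rop s γ u x y, Rop s γ v x y⟫ * muW γ x y

/-- The bilinear form `B²_γ`. -/
def B2 {n : ℕ} (s : ℝ) (γ u v : ℝ → En n) : ℝ :=
  ∫ x in I01, ∫ y in I01,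
    ‖Rop s γ γ x y‖ ^ 2 * (⟪u y - u x, v y - v x⟫ / ‖γ y - γ x‖ ^ 2) * muW γ x y

/-- The bilinear form `B³_γ`. -/
def B3 {n : ℕ} (s : ℝ) (γ u v : ℝ → En n) : ℝ :=
  ∫ x in I01, ∫ y in I01,
    ‖Rop s γ γ x y‖ ^ 2 * (⟪Dg γ u x, Dg γ v x⟫ + ⟪Dg γ u y, Dg γ v y⟫) * muW γ x y

/-- The Riemannian metric `G_γ(u,v)`. -/
def Gmet {n : ℕ} (s : ℝ) (γ u v : ℝ → En n) : ℝ :=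
  2 * B1 s γ u v + (2 * s + 1) * B2 s γ u v + B3 s γ u v + innerH1g γ u v + innerL2g γ u v

/-- The distortion `distor(γ) = sup_{x ≠ y} d_γ(x,y)/|γ(y) − γ(x)|`, valued in `[0,∞]`. -/
def distorE {n : ℕ} (γ : ℝ → En n) : ℝ≥0∞ :=
  ⨆ (x ∈ I01) (y ∈ I01) (_ : x ≠ y), ENNReal.ofReal (arcDist γ x y / ‖γ y - γ x‖)

/-- The distortion, real-valued. -/
def distor {n : ℕ} (γ : ℝ → En n) : ℝ := (distorE γ).toReal

/-- A `C¹` path `[0,1] → 𝓜 ⊂ H^s(𝕋,ℝⁿ)` (with respect to the `H^s` topology), recorded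
together with its velocity field `V`. -/
structure C1Path (s : ℝ) (n : ℕ) where
  Γ : ℝ → ℝ → En n
  V : ℝ → ℝ → En n
  mem : ∀ t ∈ Set.Icc (0 : ℝ) 1, InM s (Γ t)
  memV : ∀ t ∈ Set.Icc (0 : ℝ) 1, InHs s (V t)
  isDeriv : ∀ t ∈ Set.Icc (0 : ℝ) 1,
    Tendsto (fun h : ℝ => HsNorm s fun x => h⁻¹ • (Γ (t + h) x - Γ t x) - V t x)
      (𝓝[{h : ℝ | t + h ∈ Set.Icc (0 : ℝ) 1 ∧ h ≠ 0}] 0) (𝓝 0)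
  contV : ∀ t ∈ Set.Icc (0 : ℝ) 1,
    Tendsto (fun τ : ℝ => HsNorm s fun x => V τ x - V t x) (𝓝[Set.Icc (0 : ℝ) 1] t) (𝓝 0)

/-- Length of a path with respect to `G`. -/
def pathLen {s : ℝ} {n : ℕ} (P : C1Path s n) : ℝ :=
  ∫ t in (0 : ℝ)..1, Real.sqrt (Gmet s (P.Γ t) (P.V t) (P.V t))

/-- The path (Dirichlet) energy of a path with respect to `G`. -/
def pathEnergy {s : ℝ} {n : ℕ} (P : C1Path s n) : ℝ :=
  (1 / 2) * ∫ t in (0 : ℝ)..1, Gmet s (P.Γ t) (P.V t) (P.V t)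

/-- The geodesic distance induced by `G`, valued in `[0,∞]` (`∞` if there is no path). -/
def geodDist (s : ℝ) {n : ℕ} (γ₀ γ₁ : ℝ → En n) : ℝ≥0∞ :=
  ⨅ (P : C1Path s n) (_ : P.Γ 0 = γ₀ ∧ P.Γ 1 = γ₁), ENNReal.ofReal (pathLen P)

/-- `U ⊆ 𝓜` is bounded with respect to the geodesic distance `d_G`. -/
def GBounded (s : ℝ) {n : ℕ} (U : Set (ℝ → En n)) : Prop :=
  (∀ γ ∈ U, InM s γ) ∧
    ∃ γ₀, InM s γ₀ ∧ ∃ R : ℝ, ∀ γ ∈ U, geodDist s γ γ₀ ≤ ENNReal.ofReal R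

/-- Weak convergence in the Hilbert space `H^s(𝕋,ℝⁿ)`. -/
def WeakHsTendsto {n : ℕ} (s : ℝ) (γk : ℕ → ℝ → En n) (γ : ℝ → En n) : Prop :=
  ∀ v : ℝ → En n, InHs s v →
    Tendsto (fun k => HsInner s (γk k) v) atTop (𝓝 (HsInner s γ v))

/-- Directional derivative of `γ ↦ G_γ(u,v)` at `γ` in direction `w`. -/
def DGdir {n : ℕ} (s : ℝ) (γ w u v : ℝ → En n) : ℝ :=
  deriv (fun t : ℝ => Gmet s (fun x => γ x + t • w x) u v) 0

/-- `F'` is the derivative of the path `F` with respect to the `H^s` norm, on `S`. -/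
def IsHsDerivOn {n : ℕ} (s : ℝ) (F F' : ℝ → ℝ → En n) (S : Set ℝ) : Prop :=
  ∀ t ∈ S,
    Tendsto (fun h : ℝ => HsNorm s fun x => h⁻¹ • (F (t + h) x - F t x) - F' t x)
      (𝓝[{h : ℝ | t + h ∈ S ∧ h ≠ 0}] 0) (𝓝 0)

/-- The path `F` is continuous on `S` with respect to the `H^s` norm. -/
def HsContOn {n : ℕ} (s : ℝ) (F : ℝ → ℝ → En n) (S : Set ℝ) : Prop :=
  ∀ t ∈ S, Tendsto (fun τ : ℝ => HsNorm s fun x => F τ x - F t x) (𝓝[S] t) (𝓝 0)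

/-- A solution of the geodesic initial value problem on `[0,∞)`, recorded as a triple
(position `Γ`, velocity `V`, acceleration `W`); the geodesic equation
`Γ̈ + A_Γ(Γ̇)Γ̇ = 0` is expressed weakly via the Koszul formula for the
Christoffel operator `A`. -/
def GeodesicSol {n : ℕ} (s : ℝ) (γ₀ v₀ : ℝ → En n) (Γ V W : ℝ → ℝ → En n) : Prop :=
  (∀ t ∈ Set.Ici (0 : ℝ), InM s (Γ t) ∧ InHs s (V t) ∧ InHs s (W t)) ∧
  Γ 0 = γ₀ ∧ V 0 = v₀ ∧
  IsHsDerivOn s Γ V (Set.Ici 0) ∧ IsHsDerivOn s V W (Set.Ici 0) ∧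
  HsContOn s V (Set.Ici 0) ∧ HsContOn s W (Set.Ici 0) ∧
  ∀ t ∈ Set.Ici (0 : ℝ), ∀ w : ℝ → En n, InHs s w →
    Gmet s (Γ t) (W t) w + DGdir s (Γ t) (V t) (V t) w
      - (1 / 2) * DGdir s (Γ t) w (V t) (V t) = 0

/-!
The tangent-point energy controls the oscillation of the unit tangent `D_γ γ` in arc length: as
long as the tangent turns by at most `1` on an arc, Campanato's characterization of Hölder
continuity gives `|D_γ γ(x) - D_γ γ(y)|² ≤ c · E(γ) · d_γ(x, y)^{2α}` there.

Hence, if some arc between `x` and `y` satisfies `c · E(γ) · ℓ^{2α} < 1`, where `ℓ` is its length,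
then the chord `γ y - γ x` makes an angle of at most `π / 3` with both end tangents. On such pairs
`D_γ u(y) - D_γ u(x)` is recovered from the two first-order remainders of `u`, at `x` and at `y`,
up to an error proportional to `|u y - u x|` times the defect of alignment of the chord, which is
a first-order remainder of `γ`. These pairs contribute the multiples of `B¹` and `B²`. On the
remaining pairs `d_γ(x, y)` is bounded below by a power of the energy, and
`|D_γ u(y) - D_γ u(x)|² ≤ 2 (|D_γ u(x)|² + |D_γ u(y)|²)` suffices.
-/

section InnerProductGeometry

variable {E : Type*} [NormedAddCommGroup E]

lemma norm_sub_sq_le_two_mul (a b : E) : ‖a - b‖ ^ 2 ≤ 2 * (‖a‖ ^ 2 + ‖b‖ ^ 2) :=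
  (pow_le_pow_left₀ (norm_nonneg _) (norm_sub_le a b) 2).trans add_sq_le

lemma norm_add_sub_sq_le (a b c : E) :
    ‖a + (b - c)‖ ^ 2 ≤ 2 * ‖a‖ ^ 2 + 4 * (‖b‖ ^ 2 + ‖c‖ ^ 2) := by
  have outer := norm_sub_sq_le_two_mul a (-(b - c))
  rw [sub_neg_eq_add, norm_neg] at outer
  linarith [norm_sub_sq_le_two_mul b c]

lemma sq_sub_le_of_le {A B r : ℝ} (hA : 0 ≤ A) (hB : 0 ≤ B) (hAr : A ≤ r) (hBr : B ≤ r) :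
    (A - B) ^ 2 ≤ (r ^ 2 - A ^ 2) + (r ^ 2 - B ^ 2) := by
  nlinarith [mul_nonneg hA hB, mul_nonneg hA (sub_nonneg.2 hAr),
    mul_nonneg hB (sub_nonneg.2 hBr), mul_nonneg (sub_nonneg.2 hAr) (sub_nonneg.2 hBr)]

lemma sq_mul_norm_sub_sq_le [NormedSpace ℝ E] (U p q : E) {A B r : ℝ} (hr : 0 < r)
    (hA : r / 2 ≤ A) (hB : r / 2 ≤ B) (hAr : A ≤ r) (hBr : B ≤ r) :
    r ^ 2 * ‖q - p‖ ^ 2 ≤ 16 * (‖U - A • p‖ ^ 2 + ‖U - B • q‖ ^ 2) +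
      32 * (‖U‖ ^ 2 / r ^ 2) * ((r ^ 2 - A ^ 2) + (r ^ 2 - B ^ 2)) := by
  have hA0 : 0 < A := by linarith
  have hB0 : 0 < B := by linarith
  have decomposition :
      q - p = (B⁻¹ - A⁻¹) • U + (A⁻¹ • (U - A • p) - B⁻¹ • (U - B • q)) := by
    rw [smul_sub, smul_sub, inv_smul_smul₀ hA0.ne', inv_smul_smul₀ hB0.ne']
    module
  have triangle := norm_add_sub_sq_le ((B⁻¹ - A⁻¹) • U) (A⁻¹ • (U - A • p)) (B⁻¹ • (U - B • q))
  rw [← decomposition] at triangle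
  simp only [norm_smul, mul_pow, Real.norm_eq_abs, sq_abs] at triangle
  have inv_le : ∀ {t : ℝ}, r / 2 ≤ t → t⁻¹ ^ 2 ≤ 4 / r ^ 2 := fun {t} ht =>
    have : 0 ≤ t⁻¹ := inv_nonneg.2 (by linarith)
    calc t⁻¹ ^ 2 ≤ (r / 2)⁻¹ ^ 2 := by gcongr
      _ = 4 / r ^ 2 := by field_simp; norm_num
  have inv_sub_inv_le :
      (B⁻¹ - A⁻¹) ^ 2 ≤ 4 / r ^ 2 * (4 / r ^ 2) * ((r ^ 2 - A ^ 2) + (r ^ 2 - B ^ 2)) :=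
    calc (B⁻¹ - A⁻¹) ^ 2 = A⁻¹ ^ 2 * B⁻¹ ^ 2 * (A - B) ^ 2 := by field_simp
      _ ≤ 4 / r ^ 2 * (4 / r ^ 2) * ((r ^ 2 - A ^ 2) + (r ^ 2 - B ^ 2)) := by
        gcongr
        exacts [inv_le hA, inv_le hB, sq_sub_le_of_le hA0.le hB0.le hAr hBr]
  calc r ^ 2 * ‖q - p‖ ^ 2
      ≤ r ^ 2 * (2 * (4 / r ^ 2 * (4 / r ^ 2) * ((r ^ 2 - A ^ 2) + (r ^ 2 - B ^ 2)) * ‖U‖ ^ 2) +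
          4 * (4 / r ^ 2 * ‖U - A • p‖ ^ 2 + 4 / r ^ 2 * ‖U - B • q‖ ^ 2)) := by
        gcongr
        refine triangle.trans ?_
        gcongr
        exacts [inv_le hA, inv_le hB]
    _ = _ := by field_simp; ring

variable [InnerProductSpace ℝ E]

lemma half_le_inner_of_norm_sub_le_one {a b : E} (ha : ‖a‖ = 1) (hb : ‖b‖ = 1)
    (hab : ‖a - b‖ ≤ 1) : 1 / 2 ≤ ⟪a, b⟫ := by
  have expand := norm_sub_sq_real a b
  rw [ha, hb] at expand
  nlinarith [norm_nonneg (a - b)]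

lemma norm_sub_inner_smul_sq {T : E} (hT : ‖T‖ = 1) (D : E) :
    ‖D - ⟪T, D⟫ • T‖ ^ 2 = ‖D‖ ^ 2 - ⟪T, D⟫ ^ 2 := by
  rw [norm_sub_sq_real, inner_smul_right, norm_smul, hT, real_inner_comm, mul_one,
    Real.norm_eq_abs, sq_abs]
  ring

lemma norm_smul_sub_sq_le {T D : E} (hT : ‖T‖ = 1) (hTD : 0 ≤ ⟪T, D⟫) :
    ‖‖D‖ • T - D‖ ^ 2 ≤ 2 * ‖D - ⟪T, D⟫ • T‖ ^ 2 := by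
  have cauchy : ⟪T, D⟫ ≤ ‖D‖ := by simpa [hT] using real_inner_le_norm T D
  rw [norm_sub_inner_smul_sq hT, norm_sub_sq_real, inner_smul_left, norm_smul, hT, mul_one,
    norm_norm, RCLike.conj_to_real]
  nlinarith

lemma norm_sq_mul_norm_sub_sq_le {P Q D : E} (hP : ‖P‖ = 1) (hQ : ‖Q‖ = 1)
    (hPD : 0 ≤ ⟪P, D⟫) (hQD : 0 ≤ ⟪Q, D⟫) :
    ‖D‖ ^ 2 * ‖P - Q‖ ^ 2 ≤ 4 * (‖D - ⟪P, D⟫ • P‖ ^ 2 + ‖D - ⟪Q, D⟫ • Q‖ ^ 2) :=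
  calc ‖D‖ ^ 2 * ‖P - Q‖ ^ 2 = ‖(‖D‖ • P - D) - (‖D‖ • Q - D)‖ ^ 2 := by
        rw [sub_sub_sub_cancel_right, ← smul_sub, norm_smul, norm_norm, mul_pow]
    _ ≤ 2 * (‖‖D‖ • P - D‖ ^ 2 + ‖‖D‖ • Q - D‖ ^ 2) := norm_sub_sq_le_two_mul _ _
    _ ≤ 4 * (‖D - ⟪P, D⟫ • P‖ ^ 2 + ‖D - ⟪Q, D⟫ • Q‖ ^ 2) := by
        linarith [norm_smul_sub_sq_le hP hPD, norm_smul_sub_sq_le hQ hQD]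

lemma norm_sub_inner_smul_sq_le {T D : E} {L : ℝ} (hT : ‖T‖ = 1) (hD : ‖D‖ ≤ L) (a b : E) :
    ‖a - ⟪T, b⟫ • D‖ ^ 2 ≤ 2 * (1 + L ^ 2) * (‖a‖ ^ 2 + ‖b‖ ^ 2) := by
  have correction : ‖⟪T, b⟫ • D‖ ≤ ‖b‖ * L := by
    rw [norm_smul, Real.norm_eq_abs]
    gcongr
    simpa [hT] using abs_real_inner_le_norm T b
  have correction_sq : ‖⟪T, b⟫ • D‖ ^ 2 ≤ (‖b‖ * L) ^ 2 := by gcongr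
  nlinarith [norm_sub_sq_le_two_mul a (⟪T, b⟫ • D), sq_nonneg (‖a‖ * L), sq_nonneg ‖b‖]

end InnerProductGeometry

/-- Take the shortest subinterval at whose endpoints `f` differs by at least `δ`. -/
lemma exists_Icc_dist_eq_of_lt_dist {X : Type*} [PseudoMetricSpace X] {f : ℝ → X}
    (hf : Continuous f) {δ p q a b : ℝ} (hδ : 0 < δ) (ha : p ≤ a) (hab : a ≤ b) (hb : b ≤ q)
    (hfab : δ < dist (f a) (f b)) :
    ∃ c d, p ≤ c ∧ c < d ∧ d ≤ q ∧ dist (f c) (f d) = δ ∧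
      ∀ x ∈ Icc c d, ∀ y ∈ Icc c d, dist (f x) (f y) ≤ δ := by
  let Z : Set (ℝ × ℝ) :=
    (Icc p q ×ˢ Icc p q) ∩ {z | z.1 ≤ z.2 ∧ δ ≤ dist (f z.1) (f z.2)}
  have Z_compact : IsCompact Z := (isCompact_Icc.prod isCompact_Icc).inter_right <|
    (isClosed_le continuous_fst continuous_snd).inter
      (isClosed_le continuous_const
        ((hf.comp continuous_fst).dist (hf.comp continuous_snd)))
  have Z_nonempty : Z.Nonempty :=
    ⟨(a, b), ⟨⟨ha, hab.trans hb⟩, ha.trans hab, hb⟩, hab, hfab.le⟩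
  obtain ⟨⟨c, d⟩, ⟨⟨⟨hpc, -⟩, -, hdq⟩, hcd, hfcd⟩, minimal⟩ :=
    Z_compact.exists_isMinOn Z_nonempty (f := fun z : ℝ × ℝ => z.2 - z.1) (by fun_prop)
  dsimp only at hpc hdq hcd hfcd
  have eq_endpoints : ∀ {x y : ℝ}, c ≤ x → x ≤ y → y ≤ d → δ ≤ dist (f x) (f y) →
      x = c ∧ y = d := fun {x y} hx hxy hy hfxy => by
    have : d - c ≤ y - x := minimal (show (x, y) ∈ Z from
      ⟨⟨⟨hpc.trans hx, hxy.trans (hy.trans hdq)⟩, hpc.trans (hx.trans hxy), hy.trans hdq⟩,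
        hxy, hfxy⟩)
    constructor <;> linarith
  have dist_endpoints : dist (f c) (f d) = δ := by
    obtain ⟨t, ht, hft⟩ := intermediate_value_Icc (f := fun t => dist (f c) (f t)) hcd
      (by fun_prop) (show δ ∈ Icc _ _ from ⟨by simpa using hδ.le, hfcd⟩)
    rwa [(eq_endpoints le_rfl ht.1 ht.2 hft.ge).2] at hft
  have osc_le : ∀ {x y : ℝ}, c ≤ x → x ≤ y → y ≤ d → dist (f x) (f y) ≤ δ :=
    fun {x y} hx hxy hy => by
      by_contra! h
      obtain ⟨rfl, rfl⟩ := eq_endpoints hx hxy hy h.le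
      exact h.ne' dist_endpoints
  refine ⟨c, d, hpc, hcd.lt_of_ne ?_, hdq, dist_endpoints, fun x hx y hy => ?_⟩
  · rintro rfl
    simp [hδ.ne] at dist_endpoints
  · rcases le_total x y with hxy | hyx
    · exact osc_le hx.1 hxy hy.2
    · rw [dist_comm]
      exact osc_le hy.1 hyx hx.2

section Averages

variable {Ω : Type*} [MeasurableSpace Ω]

lemma sq_lintegral_le_lintegral_sq (P : Measure Ω) [IsProbabilityMeasure P] {h : Ω → ℝ≥0∞}
    (hm : AEMeasurable h P) : (∫⁻ x, h x ∂P) ^ 2 ≤ ∫⁻ x, h x ^ 2 ∂P := by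
  have holder := ENNReal.lintegral_mul_le_Lp_mul_Lq P .two_two hm
    (aemeasurable_const (b := (1 : ℝ≥0∞)))
  simp only [Pi.mul_apply, mul_one, ENNReal.one_rpow, lintegral_const, measure_univ] at holder
  calc (∫⁻ x, h x ∂P) ^ 2 ≤ ((∫⁻ x, h x ^ (2 : ℝ) ∂P) ^ (1 / (2 : ℝ))) ^ 2 := by gcongr
    _ = ∫⁻ x, h x ^ 2 ∂P := by
      rw [← ENNReal.rpow_natCast, ← ENNReal.rpow_mul]
      norm_num

variable {E : Type*} [NormedAddCommGroup E] [NormedSpace ℝ E]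

lemma enorm_integral_sub_integral_sq_le (P Q : Measure Ω) [IsProbabilityMeasure P]
    [IsProbabilityMeasure Q] {f : Ω → E} (hP : Integrable f P) (hQ : Integrable f Q) :
    ‖(∫ x, f x ∂P) - ∫ y, f y ∂Q‖ₑ ^ 2 ≤ ∫⁻ x, ∫⁻ y, ‖f x - f y‖ₑ ^ 2 ∂Q ∂P := by
  have hdiff : Integrable (fun z : Ω × Ω => f z.1 - f z.2) (P.prod Q) :=
    (hP.comp_fst Q).sub (hQ.comp_snd P)
  calc ‖(∫ x, f x ∂P) - ∫ y, f y ∂Q‖ₑ ^ 2 = ‖∫ z, (f z.1 - f z.2) ∂P.prod Q‖ₑ ^ 2 := by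
        rw [integral_sub (hP.comp_fst Q) (hQ.comp_snd P), integral_fun_fst, integral_fun_snd,
          probReal_univ, probReal_univ, one_smul, one_smul]
    _ ≤ (∫⁻ z, ‖f z.1 - f z.2‖ₑ ∂P.prod Q) ^ 2 := by
        gcongr
        exact enorm_integral_le_lintegral_enorm _
    _ ≤ ∫⁻ z, ‖f z.1 - f z.2‖ₑ ^ 2 ∂P.prod Q :=
        sq_lintegral_le_lintegral_sq _ hdiff.aestronglyMeasurable.enorm
    _ = ∫⁻ x, ∫⁻ y, ‖f x - f y‖ₑ ^ 2 ∂Q ∂P :=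
        lintegral_prod _ (hdiff.aestronglyMeasurable.enorm.pow_const 2)

lemma enorm_average_sub_average_sq_le (μ ν : Measure Ω) [IsFiniteMeasure μ] [NeZero μ]
    [IsFiniteMeasure ν] [NeZero ν] {f : Ω → E} (hμ : Integrable f μ) (hν : Integrable f ν) :
    ‖(⨍ x, f x ∂μ) - ⨍ y, f y ∂ν‖ₑ ^ 2 ≤
      (μ univ)⁻¹ * ((ν univ)⁻¹ * ∫⁻ x, ∫⁻ y, ‖f x - f y‖ₑ ^ 2 ∂ν ∂μ) := by
  refine (enorm_integral_sub_integral_sq_le _ _ hμ.to_average hν.to_average).trans_eq ?_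
  have hν_inv : (ν univ)⁻¹ ≠ ∞ := ENNReal.inv_ne_top.2 (by simpa using NeZero.ne ν)
  simp only [lintegral_smul_measure, smul_eq_mul, lintegral_const_mul' _ _ hν_inv,
    mul_left_comm]

lemma tendsto_setAverage_of_tendsto_smallSets [CompleteSpace E] [TopologicalSpace Ω]
    {ι : Type*} {l : Filter ι} {μ : Measure Ω} {f : Ω → E} {x : Ω} {I : ι → Set Ω}
    (hf : ContinuousAt f x) (hI : Tendsto I l (𝓝 x).smallSets) (hmeas : ∀ i, MeasurableSet (I i))
    (hpos : ∀ i, μ (I i) ≠ 0) (hfin : ∀ i, μ (I i) ≠ ∞) (hint : ∀ i, IntegrableOn f (I i) μ) :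
    Tendsto (fun i => ⨍ y in I i, f y ∂μ) l (𝓝 (f x)) := by
  refine Metric.nhds_basis_closedBall.tendsto_right_iff.2 fun ε hε => ?_
  have near : ∀ᶠ s in (𝓝 x).smallSets, ∀ y ∈ s, f y ∈ Metric.closedBall (f x) ε :=
    eventually_smallSets_forall.2 (hf.eventually (Metric.closedBall_mem_nhds _ hε))
  filter_upwards [hI.eventually near] with i hi
  exact (convex_closedBall _ _).set_average_mem Metric.isClosed_closedBall (hpos i) (hfin i)
    ((ae_restrict_iff' (hmeas i)).2 (.of_forall hi)) (hint i)

end Averages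

section Campanato

variable {E : Type*} [NormedAddCommGroup E] {f : ℝ → E} {α M : ℝ}

lemma tendsto_Icc_contraction_smallSets (x A B : ℝ) :
    Tendsto (fun k : ℕ => Icc (x - (1 / 2) ^ k * A) (x + (1 / 2) ^ k * B)) atTop
      (𝓝 x).smallSets := by
  have decay : Tendsto (fun k : ℕ => (1 / 2 : ℝ) ^ k) atTop (𝓝 0) :=
    tendsto_pow_atTop_nhds_zero_of_lt_one (by norm_num) (by norm_num)
  exact Tendsto.Icc (by simpa using (decay.mul_const A).const_sub x)
    (by simpa using (decay.mul_const B).const_add x)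

variable [NormedSpace ℝ E]

lemma norm_setAverage_sub_setAverage_half_le (hf : Continuous f) (hM : 0 ≤ M) {c d c' d' : ℝ}
    (hcd : c < d) (hcc' : c ≤ c') (hd'd : d' ≤ d) (half : d' - c' = (d - c) / 2)
    (bound : ∫⁻ p in Icc c d, ∫⁻ q in Icc c d, ‖f p - f q‖ₑ ^ 2 ≤
      ENNReal.ofReal (M * (d - c) ^ (2 * α + 2))) :
    ‖(⨍ y in Icc c d, f y) - ⨍ y in Icc c' d', f y‖ ≤ 2 * √M * (d - c) ^ α := by
  have hr : 0 < d - c := sub_pos.2 hcd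
  have neZero : ∀ {a b : ℝ}, a < b → NeZero (volume.restrict (Icc a b)) := fun {a b} hab =>
    ⟨by simpa using hab⟩
  have := neZero hcd
  have := neZero (show c' < d' by linarith)
  have avg := enorm_average_sub_average_sq_le _ _
    (hf.integrableOn_Icc (μ := volume) (a := c) (b := d))
    (hf.integrableOn_Icc (μ := volume) (a := c') (b := d'))
  have power : (d - c)⁻¹ * (((d - c) / 2)⁻¹ * (M * (d - c) ^ (2 * α + 2))) =
      2 * M * ((d - c) ^ α) ^ 2 := by
    rw [Real.rpow_add hr, mul_comm 2 α, Real.rpow_mul hr.le, Real.rpow_ofNat, Real.rpow_ofNat]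
    field_simp
  have sq_bound : ‖(⨍ y in Icc c d, f y) - ⨍ y in Icc c' d', f y‖ₑ ^ 2 ≤
      ENNReal.ofReal (2 * M * ((d - c) ^ α) ^ 2) :=
    calc _ ≤ _ := avg
      _ ≤ (ENNReal.ofReal (d - c))⁻¹ * ((ENNReal.ofReal ((d - c) / 2))⁻¹ *
            ENNReal.ofReal (M * (d - c) ^ (2 * α + 2))) := by
          simp only [Measure.restrict_apply_univ, Real.volume_Icc, half]
          gcongr
          exact (lintegral_mono fun p => lintegral_mono_set (Icc_subset_Icc hcc' hd'd)).trans bound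
      _ = ENNReal.ofReal (2 * M * ((d - c) ^ α) ^ 2) := by
          rw [← ENNReal.ofReal_inv_of_pos hr, ← ENNReal.ofReal_inv_of_pos (half_pos hr),
            ← ENNReal.ofReal_mul (by positivity), ← ENNReal.ofReal_mul (by positivity), power]
  rw [← ofReal_norm, ← ENNReal.ofReal_pow (norm_nonneg _),
    ENNReal.ofReal_le_ofReal_iff (by positivity)] at sq_bound
  refine (sq_le_sq₀ (norm_nonneg _) (by positivity)).1 (sq_bound.trans ?_)
  rw [mul_pow, mul_pow, Real.sq_sqrt hM]
  gcongr
  norm_num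

variable [CompleteSpace E] {a b : ℝ}

/-- Telescoping over the averages on intervals that halve towards `x`. -/
lemma norm_setAverage_sub_le (hf : Continuous f) (hα : 0 < α) (hM : 0 ≤ M) (hab : a < b)
    (bound : ∀ c d, a ≤ c → c < d → d ≤ b →
      ∫⁻ p in Icc c d, ∫⁻ q in Icc c d, ‖f p - f q‖ₑ ^ 2 ≤
        ENNReal.ofReal (M * (d - c) ^ (2 * α + 2)))
    {x : ℝ} (hx : x ∈ Icc a b) :
    ‖(⨍ y in Icc a b, f y) - f x‖ ≤ 2 * √M * (b - a) ^ α / (1 - (1 / 2) ^ α) := by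
  let c : ℕ → ℝ := fun k => x - (1 / 2) ^ k * (x - a)
  let d : ℕ → ℝ := fun k => x + (1 / 2) ^ k * (b - x)
  have length : ∀ k, d k - c k = (1 / 2) ^ k * (b - a) := fun k => by simp only [c, d]; ring
  have hcd : ∀ k, c k < d k := fun k => by
    have := length k
    have : 0 < (1 / 2 : ℝ) ^ k * (b - a) := by have := sub_pos.2 hab; positivity
    linarith
  have contraction : ∀ k, (1 / 2 : ℝ) ^ (k + 1) ≤ (1 / 2) ^ k := fun k =>
    pow_le_pow_of_le_one (by norm_num) (by norm_num) (Nat.le_succ k)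
  have c_mono : Monotone c := monotone_nat_of_le_succ fun k => by
    have := mul_le_mul_of_nonneg_right (contraction k) (sub_nonneg.2 hx.1)
    simp only [c]; linarith
  have d_anti : Antitone d := antitone_nat_of_succ_le fun k => by
    have := mul_le_mul_of_nonneg_right (contraction k) (sub_nonneg.2 hx.2)
    simp only [d]; linarith
  have hc0 : c 0 = a := by simp [c]
  have hd0 : d 0 = b := by simp [d]
  have limit : Tendsto (fun k => ⨍ y in Icc (c k) (d k), f y) atTop (𝓝 (f x)) :=
    tendsto_setAverage_of_tendsto_smallSets hf.continuousAt
      (tendsto_Icc_contraction_smallSets x (x - a) (b - x)) (fun _ => measurableSet_Icc)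
      (fun k => by simpa using hcd k) (fun _ => measure_Icc_lt_top.ne)
      (fun _ => hf.integrableOn_Icc)
  have step : ∀ k, dist (⨍ y in Icc (c k) (d k), f y) (⨍ y in Icc (c (k + 1)) (d (k + 1)), f y) ≤
      2 * √M * (b - a) ^ α * ((1 / 2) ^ α) ^ k := fun k => by
    have := norm_setAverage_sub_setAverage_half_le hf hM (hcd k) (c_mono k.le_succ)
      (d_anti k.le_succ) (by rw [length, length, pow_succ]; ring)
      (bound _ _ (hc0 ▸ c_mono k.zero_le) (hcd k) (hd0 ▸ d_anti k.zero_le))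
    rw [dist_eq_norm]
    refine this.trans_eq ?_
    rw [length, Real.mul_rpow (by positivity) (sub_nonneg.2 hab.le),
      Real.rpow_pow_comm (by norm_num)]
    ring
  have := dist_le_of_le_geometric_of_tendsto₀ _ _
    (Real.rpow_lt_one (by norm_num) (by norm_num) hα) step limit
  simpa only [dist_eq_norm, hc0, hd0] using this

lemma norm_sub_sq_le_of_lintegral_le (hf : Continuous f) (hα : 0 < α) (hM : 0 ≤ M)
    (hab : a < b)
    (bound : ∀ c d, a ≤ c → c < d → d ≤ b →
      ∫⁻ p in Icc c d, ∫⁻ q in Icc c d, ‖f p - f q‖ₑ ^ 2 ≤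
        ENNReal.ofReal (M * (d - c) ^ (2 * α + 2))) :
    ‖f a - f b‖ ^ 2 ≤ 16 / (1 - (1 / 2) ^ α) ^ 2 * M * (b - a) ^ (2 * α) := by
  have left := norm_setAverage_sub_le hf hα hM hab bound (left_mem_Icc.2 hab.le)
  have right := norm_setAverage_sub_le hf hα hM hab bound (right_mem_Icc.2 hab.le)
  have triangle := norm_sub_le_norm_sub_add_norm_sub (f a) (⨍ y in Icc a b, f y) (f b)
  rw [norm_sub_rev] at left
  calc ‖f a - f b‖ ^ 2 ≤ (2 * (2 * √M * (b - a) ^ α / (1 - (1 / 2) ^ α))) ^ 2 := by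
        gcongr
        linarith
    _ = 16 / (1 - (1 / 2) ^ α) ^ 2 * M * (b - a) ^ (2 * α) := by
        rw [mul_comm 2 α, Real.rpow_mul (sub_nonneg.2 hab.le), Real.rpow_ofNat, mul_pow, div_pow,
          mul_pow, mul_pow, Real.sq_sqrt hM]
        ring

end Campanato

section DoubleIntegrals

variable {Ω : Type*} [MeasurableSpace Ω] {μ : Measure Ω} [SFinite μ]

lemma lintegral_lintegral_add_swap {F : Ω → Ω → ℝ≥0∞}
    (hF : AEMeasurable (Function.uncurry F) (μ.prod μ)) :
    ∫⁻ x, ∫⁻ y, (F x y + F y x) ∂μ ∂μ = 2 * ∫⁻ x, ∫⁻ y, F x y ∂μ ∂μ := by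
  have hFswap : AEMeasurable (fun z : Ω × Ω => F z.2 z.1) (μ.prod μ) := hF.prod_swap
  rw [lintegral_lintegral (f := fun x y => F x y + F y x) (hF.add hFswap), lintegral_lintegral hF,
    lintegral_add_left' (f := fun z : Ω × Ω => F z.1 z.2) hF, two_mul]
  congr 1
  exact lintegral_prod_swap (fun z : Ω × Ω => F z.1 z.2)

lemma lintegral_lintegral_ofReal_le_of_le_add_swap {F H : Ω → Ω → ℝ}
    (hH : Integrable (Function.uncurry H) (μ.prod μ)) (hH0 : ∀ x y, 0 ≤ H x y)
    (hFH : ∀ x y, F x y ≤ H x y + H y x) :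
    ∫⁻ x, ∫⁻ y, ENNReal.ofReal (F x y) ∂μ ∂μ ≤
      ENNReal.ofReal (2 * ∫ x, ∫ y, H x y ∂μ ∂μ) :=
  have hHm : AEMeasurable (Function.uncurry fun x y => ENNReal.ofReal (H x y)) (μ.prod μ) :=
    hH.aemeasurable.ennreal_ofReal
  calc ∫⁻ x, ∫⁻ y, ENNReal.ofReal (F x y) ∂μ ∂μ
      ≤ ∫⁻ x, ∫⁻ y, (ENNReal.ofReal (H x y) + ENNReal.ofReal (H y x)) ∂μ ∂μ := by
        gcongr with x y
        rw [← ENNReal.ofReal_add (hH0 _ _) (hH0 _ _)]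
        exact ENNReal.ofReal_le_ofReal (hFH x y)
    _ = ENNReal.ofReal (2 * ∫ x, ∫ y, H x y ∂μ ∂μ) := by
        rw [lintegral_lintegral_add_swap hHm, lintegral_lintegral hHm, integral_integral hH,
          ENNReal.ofReal_mul zero_le_two, ENNReal.ofReal_ofNat,
          ofReal_integral_eq_lintegral_ofReal (f := fun z : Ω × Ω => H z.1 z.2) hH
            (.of_forall fun z => hH0 z.1 z.2)]

lemma integrable_uncurry_of_lintegral_ofReal_lt_top {F : Ω → Ω → ℝ}
    (hF : Measurable (Function.uncurry F)) (hF0 : ∀ x y, 0 ≤ F x y)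
    (hfin : ∫⁻ x, ∫⁻ y, ENNReal.ofReal (F x y) ∂μ ∂μ < ∞) :
    Integrable (Function.uncurry F) (μ.prod μ) := by
  rw [lintegral_lintegral hF.ennreal_ofReal.aemeasurable] at hfin
  exact (lintegral_ofReal_ne_top_iff_integrable hF.aestronglyMeasurable
    (.of_forall fun z => hF0 z.1 z.2)).1 hfin.ne

end DoubleIntegrals

section PeriodicIntegrals

lemma lintegral_Ioc_const_add (f : ℝ → ℝ≥0∞) (x a b : ℝ) :
    ∫⁻ y in Ioc (x + a) (x + b), f y = ∫⁻ h in Ioc a b, f (x + h) := by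
  rw [← image_const_add_Ioc, lintegral_image_eq_lintegral_abs_deriv_mul
    (f := fun h => x + h) (f' := fun _ => 1) measurableSet_Ioc
    (fun h _ => ((hasDerivAt_id h).const_add x).hasDerivWithinAt) (add_right_injective x).injOn]
  simp

lemma lintegral_Ioc_const_mul (f : ℝ → ℝ≥0∞) (a b : ℝ) {θ : ℝ} (hθ : 0 < θ) :
    ∫⁻ y in Ioc (θ * a) (θ * b), f y = ENNReal.ofReal θ * ∫⁻ h in Ioc a b, f (θ * h) := by
  rw [← image_mul_left_Ioc hθ, lintegral_image_eq_lintegral_abs_deriv_mul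
    (f := fun h => θ * h) (f' := fun _ => θ) measurableSet_Ioc
    (fun h _ => by simpa using ((hasDerivAt_id h).const_mul θ).hasDerivWithinAt)
    (mul_right_injective₀ hθ.ne').injOn, abs_of_pos hθ,
    lintegral_const_mul' _ _ ENNReal.ofReal_ne_top]

variable {f : ℝ → ℝ≥0∞}

lemma lintegral_Ioc_eq_lintegral_I01 (hf : Function.Periodic f 1) (a : ℝ) :
    ∫⁻ y in Ioc a (a + 1), f y = ∫⁻ y in I01, f y := by
  have over_circle : ∀ t : ℝ, ∫⁻ y in Ioc t (t + 1), f y = ∫⁻ z : UnitAddCircle, hf.lift z :=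
    fun t => UnitAddCircle.lintegral_preimage t hf.lift
  rw [over_circle a, ← over_circle 0, zero_add, I01, restrict_Ico_eq_restrict_Ioc]

lemma lintegral_I01_eq_lintegral_centered (hf : Function.Periodic f 1) (x : ℝ) :
    ∫⁻ y in I01, f y = ∫⁻ h in Ioc (-1 / 2) (1 / 2), f (x + h) := by
  rw [← lintegral_Ioc_const_add, ← lintegral_Ioc_eq_lintegral_I01 hf (x + -1 / 2)]
  ring_nf

lemma lintegral_lintegral_Icc_le_lintegral_lintegral_I01 {f : ℝ → ℝ → ℝ≥0∞}
    (hf : ∀ x, Function.Periodic (f x) 1) (hf' : ∀ y, Function.Periodic (fun x => f x y) 1)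
    {c d : ℝ} (hd : d ≤ c + 1) :
    ∫⁻ x in Icc c d, ∫⁻ y in Icc c d, f x y ≤ ∫⁻ x in I01, ∫⁻ y in I01, f x y := by
  have restrict_le : (volume : Measure ℝ).restrict (Icc c d) ≤
      volume.restrict (Ioc c (c + 1)) := by
    rw [← restrict_Ioc_eq_restrict_Icc]
    exact Measure.restrict_mono (Ioc_subset_Ioc le_rfl hd) le_rfl
  have outer_periodic : Function.Periodic (fun x => ∫⁻ y in I01, f x y) 1 :=
    fun x => lintegral_congr fun y => hf' y x
  calc ∫⁻ x in Icc c d, ∫⁻ y in Icc c d, f x y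
      ≤ ∫⁻ x in Ioc c (c + 1), ∫⁻ y in Ioc c (c + 1), f x y :=
        lintegral_mono' restrict_le fun _ => lintegral_mono' restrict_le le_rfl
    _ = ∫⁻ x in I01, ∫⁻ y in I01, f x y := by
        simp_rw [lintegral_Ioc_eq_lintegral_I01 (hf _)]
        exact lintegral_Ioc_eq_lintegral_I01 outer_periodic c

lemma periodic_add_intCast {β : Type*} {g : ℝ → β} (hg : Function.Periodic g 1) (x : ℝ)
    (k : ℤ) : g (x + k) = g x := by
  simpa using hg.int_mul k x

end PeriodicIntegrals

section ImmersedLoops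

variable {E : Type*} [NormedAddCommGroup E] [NormedSpace ℝ E] {f : ℝ → E}

lemma periodic_deriv {c : ℝ} (hf : Function.Periodic f c) : Function.Periodic (deriv f) c :=
  fun x => by rw [← deriv_comp_add_const, funext hf]

lemma hasDerivAt_of_contDiff_one (hf : ContDiff ℝ 1 f) (x : ℝ) : HasDerivAt f (deriv f x) x :=
  (hf.differentiable one_ne_zero x).hasDerivAt

lemma sub_eq_integral_deriv [CompleteSpace E] (hf : ContDiff ℝ 1 f) (a b : ℝ) :
    f b - f a = ∫ t in a..b, deriv f t :=
  (intervalIntegral.integral_deriv_eq_sub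
    (fun t _ => (hasDerivAt_of_contDiff_one hf t).differentiableAt)
    ((hf.continuous_deriv le_rfl).intervalIntegrable a b)).symm

variable {n : ℕ} {s : ℝ} {γ u : ℝ → En n}

/-- A `C¹` immersion of the circle `ℝ/ℤ` into `ℝⁿ`, encoded as a `1`-periodic function on `ℝ`. -/
structure IsImmersedLoop (γ : ℝ → En n) : Prop where
  periodic : Function.Periodic γ 1
  contDiff : ContDiff ℝ 1 γ
  deriv_ne_zero : ∀ x, deriv γ x ≠ 0

lemma InM.isImmersedLoop (hγ : InM s γ) : IsImmersedLoop γ := ⟨hγ.1.1, hγ.1.2.1, hγ.2.2⟩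

lemma DDg_eq_inner_smul (γ u : ℝ → En n) (x : ℝ) (w : En n) :
    DDg γ u x w = ⟪Dg γ γ x, w⟫ • Dg γ u x := by
  rw [DDg, Dg, Dg, real_inner_smul_left, smul_smul]
  ring_nf

/-- The signed arc length of `γ` from `γ 0` to `γ t`. -/
def arcParam (γ : ℝ → En n) (t : ℝ) : ℝ := ∫ r in (0 : ℝ)..t, ‖deriv γ r‖

namespace IsImmersedLoop

lemma continuous_deriv (hγ : IsImmersedLoop γ) : Continuous (deriv γ) :=
  hγ.contDiff.continuous_deriv le_rfl

lemma norm_deriv_pos (hγ : IsImmersedLoop γ) (x : ℝ) : 0 < ‖deriv γ x‖ :=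
  norm_pos_iff.2 (hγ.deriv_ne_zero x)

lemma norm_deriv_smul_Dg (hγ : IsImmersedLoop γ) (u : ℝ → En n) (x : ℝ) :
    ‖deriv γ x‖ • Dg γ u x = deriv u x := by
  rw [Dg, smul_inv_smul₀ (hγ.norm_deriv_pos x).ne']

lemma norm_Dg_self (hγ : IsImmersedLoop γ) (x : ℝ) : ‖Dg γ γ x‖ = 1 := by
  rw [Dg, norm_smul, norm_inv, norm_norm, inv_mul_cancel₀ (hγ.norm_deriv_pos x).ne']

lemma continuous_Dg (hγ : IsImmersedLoop γ) (hu : Continuous (deriv u)) : Continuous (Dg γ u) :=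
  (hγ.continuous_deriv.norm.inv₀ fun x => (hγ.norm_deriv_pos x).ne').smul hu

lemma periodic_Dg (hγ : IsImmersedLoop γ) (hu : Function.Periodic u 1) :
    Function.Periodic (Dg γ u) 1 := fun x => by
  rw [Dg, periodic_deriv hγ.periodic, periodic_deriv hu, Dg]

lemma integral_norm_deriv (hγ : IsImmersedLoop γ) (a b : ℝ) :
    ∫ t in a..b, ‖deriv γ t‖ = arcParam γ b - arcParam γ a :=
  (intervalIntegral.integral_interval_sub_left
    (hγ.continuous_deriv.norm.intervalIntegrable _ _)
    (hγ.continuous_deriv.norm.intervalIntegrable _ _)).symm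

lemma hasDerivAt_arcParam (hγ : IsImmersedLoop γ) (x : ℝ) :
    HasDerivAt (arcParam γ) ‖deriv γ x‖ x :=
  hγ.continuous_deriv.norm.integral_hasStrictDerivAt 0 x |>.hasDerivAt

lemma strictMono_arcParam (hγ : IsImmersedLoop γ) : StrictMono (arcParam γ) :=
  strictMono_of_deriv_pos fun x => by
    rw [(hγ.hasDerivAt_arcParam x).deriv]
    exact hγ.norm_deriv_pos x

lemma surjective_arcParam (hγ : IsImmersedLoop γ) : Function.Surjective (arcParam γ) := by
  have speed_periodic : Function.Periodic (fun x => ‖deriv γ x‖) 1 :=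
    (periodic_deriv hγ.periodic).comp norm
  have speed_integrable := hγ.continuous_deriv.norm.intervalIntegrable (μ := volume) 0 1
  have continuous : Continuous (arcParam γ) :=
    continuous_iff_continuousAt.2 fun x => (hγ.hasDerivAt_arcParam x).continuousAt
  exact continuous.surjective
    (speed_periodic.tendsto_atTop_intervalIntegral_of_pos' speed_integrable hγ.norm_deriv_pos
      one_pos)
    (speed_periodic.tendsto_atBot_intervalIntegral_of_pos' speed_integrable hγ.norm_deriv_pos
      one_pos)

/-- The arc-length parameter as an order isomorphism; its inverse reparametrizes by arc length. -/
def arcParamIso (hγ : IsImmersedLoop γ) : ℝ ≃o ℝ :=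
  hγ.strictMono_arcParam.orderIsoOfSurjective _ hγ.surjective_arcParam

lemma lintegral_Icc_comp_arcParamIso_symm (hγ : IsImmersedLoop γ) (g : ℝ → ℝ≥0∞) (c d : ℝ) :
    ∫⁻ σ in Icc (arcParam γ c) (arcParam γ d), g (hγ.arcParamIso.symm σ) =
      ∫⁻ x in Icc c d, ENNReal.ofReal ‖deriv γ x‖ * g x := by
  have image : hγ.arcParamIso '' Icc c d = Icc (arcParam γ c) (arcParam γ d) :=
    hγ.arcParamIso.image_Icc c d
  rw [← image, lintegral_image_eq_lintegral_deriv_mul_of_monotoneOn (f := hγ.arcParamIso)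
    measurableSet_Icc (fun x _ => (hγ.hasDerivAt_arcParam x).hasDerivWithinAt)
    (hγ.arcParamIso.monotone.monotoneOn _)]
  simp only [OrderIso.symm_apply_apply]

lemma lintegral_lintegral_Icc_comp_arcParamIso_symm (hγ : IsImmersedLoop γ)
    (g : ℝ → ℝ → ℝ≥0∞) (c d : ℝ) :
    ∫⁻ σ in Icc (arcParam γ c) (arcParam γ d), ∫⁻ τ in Icc (arcParam γ c) (arcParam γ d),
        g (hγ.arcParamIso.symm σ) (hγ.arcParamIso.symm τ) =
      ∫⁻ x in Icc c d, ENNReal.ofReal ‖deriv γ x‖ *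
        ∫⁻ y in Icc c d, ENNReal.ofReal ‖deriv γ y‖ * g x y := by
  simp_rw [fun σ => hγ.lintegral_Icc_comp_arcParamIso_symm (g (hγ.arcParamIso.symm σ)) c d]
  exact hγ.lintegral_Icc_comp_arcParamIso_symm
    (fun x => ∫⁻ y in Icc c d, ENNReal.ofReal ‖deriv γ y‖ * g x y) c d

lemma norm_sub_le_abs_arcParam_sub (hγ : IsImmersedLoop γ) (x y : ℝ) :
    ‖γ y - γ x‖ ≤ |arcParam γ y - arcParam γ x| := by
  rw [sub_eq_integral_deriv hγ.contDiff, ← hγ.integral_norm_deriv]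
  exact intervalIntegral.norm_integral_le_abs_integral_norm

lemma norm_sub_le_arcDist (hγ : IsImmersedLoop γ) (x y : ℝ) : ‖γ y - γ x‖ ≤ arcDist γ x y :=
  le_ciInf fun k => by
    rw [hγ.integral_norm_deriv, ← periodic_add_intCast hγ.periodic y k]
    exact hγ.norm_sub_le_abs_arcParam_sub x (y + k)

lemma mul_arcParam_sub_le_inner (hγ : IsImmersedLoop γ) {w : En n} {x y m : ℝ} (hxy : x ≤ y)
    (hw : ∀ t ∈ Icc x y, m ≤ ⟪w, Dg γ γ t⟫) :
    m * (arcParam γ y - arcParam γ x) ≤ ⟪w, γ y - γ x⟫ := by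
  have inner_integral : ⟪w, ∫ t in x..y, deriv γ t⟫ = ∫ t in x..y, ⟪w, deriv γ t⟫ :=
    ((innerSL ℝ w).intervalIntegral_comp_comm
      (hγ.continuous_deriv.intervalIntegrable (μ := volume) x y)).symm
  rw [sub_eq_integral_deriv hγ.contDiff, ← hγ.integral_norm_deriv, inner_integral,
    ← intervalIntegral.integral_const_mul]
  refine intervalIntegral.integral_mono_on hxy
    ((continuous_const.mul hγ.continuous_deriv.norm).intervalIntegrable _ _)
    ((continuous_const.inner hγ.continuous_deriv).intervalIntegrable _ _) fun t ht => ?_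
  rw [← hγ.norm_deriv_smul_Dg γ t, real_inner_smul_right, norm_smul, norm_norm,
    hγ.norm_Dg_self, mul_one, mul_comm]
  gcongr
  exact hw t ht

end IsImmersedLoop

end ImmersedLoops

section TangentPointDensity

variable {n : ℕ} {s : ℝ} {γ u : ℝ → En n} {x y : ℝ}

/-- The density of `B¹_γ(u, u)` with respect to `λ ⊗ λ`; for `u = γ` it is the density of the
tangent-point energy. -/
def tpDensity (s : ℝ) (γ u : ℝ → En n) (x y : ℝ) : ℝ := ‖Rop s γ u x y‖ ^ 2 * muW γ x y

lemma EtpE_eq_lintegral_tpDensity (s : ℝ) (γ : ℝ → En n) :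
    EtpE s γ = ∫⁻ x in I01, ∫⁻ y in I01, ENNReal.ofReal (tpDensity s γ γ x y) := rfl

lemma muW_nonneg (γ : ℝ → En n) (x y : ℝ) : 0 ≤ muW γ x y := by
  unfold muW
  positivity

lemma tpDensity_nonneg (s : ℝ) (γ u : ℝ → En n) (x y : ℝ) : 0 ≤ tpDensity s γ u x y :=
  mul_nonneg (sq_nonneg _) (muW_nonneg γ x y)

lemma measurable_uncurry_tpDensity (hγ : Measurable γ) (hu : Measurable u) :
    Measurable (Function.uncurry (tpDensity s γ u)) := by
  unfold Function.uncurry tpDensity Rop DDg muW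
  fun_prop

lemma periodic_tpDensity_right (hγ : Function.Periodic γ 1) (hu : Function.Periodic u 1)
    (x : ℝ) : Function.Periodic (tpDensity s γ u x) 1 := fun y => by
  simp only [tpDensity, Rop, DDg, muW, hγ y, hu y, periodic_deriv hγ y]

lemma periodic_tpDensity_left (hγ : Function.Periodic γ 1) (hu : Function.Periodic u 1)
    (y : ℝ) : Function.Periodic (fun x => tpDensity s γ u x y) 1 := fun x => by
  simp only [tpDensity, Rop, DDg, muW, hγ x, hu x, periodic_deriv hγ x, periodic_deriv hu x]

lemma tpDensity_eq (hxy : γ x ≠ γ y) :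
    tpDensity s γ u x y =
      ‖u y - u x - ⟪Dg γ γ x, γ y - γ x⟫ • Dg γ u x‖ ^ 2 / ‖γ y - γ x‖ ^ (2 * s + 1) *
        (‖deriv γ x‖ * ‖deriv γ y‖) := by
  have hr : 0 < ‖γ y - γ x‖ := norm_sub_pos_iff.2 hxy.symm
  rw [tpDensity, Rop, DDg_eq_inner_smul, muW, norm_smul, mul_pow, norm_inv,
    Real.norm_of_nonneg (by positivity), Real.rpow_add hr, mul_comm 2 s, Real.rpow_mul hr.le,
    Real.rpow_one, Real.rpow_ofNat]
  field_simp

lemma tpDensity_swap_eq (hxy : γ x ≠ γ y) :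
    tpDensity s γ u y x =
      ‖u y - u x - ⟪Dg γ γ y, γ y - γ x⟫ • Dg γ u y‖ ^ 2 / ‖γ y - γ x‖ ^ (2 * s + 1) *
        (‖deriv γ x‖ * ‖deriv γ y‖) := by
  have neg_remainder : u x - u y - ⟪Dg γ γ y, γ x - γ y⟫ • Dg γ u y =
      -(u y - u x - ⟪Dg γ γ y, γ y - γ x⟫ • Dg γ u y) := by
    rw [← neg_sub (γ y), inner_neg_right]
    module
  rw [tpDensity_eq hxy.symm, neg_remainder, norm_neg, norm_sub_rev (γ x), mul_comm ‖deriv γ y‖]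

end TangentPointDensity

section TangentOscillation

variable {n : ℕ} {s : ℝ} {γ u : ℝ → En n}

/-- The chord from `γ x` to `γ y` makes an angle of at most `π/3` with the oriented tangents at
both of its end points. -/
def ForwardChord (γ : ℝ → En n) (x y : ℝ) : Prop :=
  ‖γ y - γ x‖ / 2 ≤ ⟪Dg γ γ x, γ y - γ x⟫ ∧ ‖γ y - γ x‖ / 2 ≤ ⟪Dg γ γ y, γ y - γ x⟫

namespace IsImmersedLoop

variable {x y c d : ℝ}

lemma half_arcParam_sub_le_inner (hγ : IsImmersedLoop γ) (hxy : x ≤ y)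
    (osc : ∀ a ∈ Icc x y, ∀ b ∈ Icc x y, ‖Dg γ γ a - Dg γ γ b‖ ≤ 1) {z : ℝ}
    (hz : z ∈ Icc x y) :
    1 / 2 * (arcParam γ y - arcParam γ x) ≤ ⟪Dg γ γ z, γ y - γ x⟫ :=
  hγ.mul_arcParam_sub_le_inner hxy fun t ht =>
    half_le_inner_of_norm_sub_le_one (hγ.norm_Dg_self z) (hγ.norm_Dg_self t) (osc z hz t ht)

lemma norm_sub_le_arcParam_sub (hγ : IsImmersedLoop γ) (hxy : x ≤ y) :
    ‖γ y - γ x‖ ≤ arcParam γ y - arcParam γ x := by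
  have := hγ.norm_sub_le_abs_arcParam_sub x y
  rwa [abs_of_nonneg (sub_nonneg.2 (hγ.strictMono_arcParam.monotone hxy))] at this

lemma forwardChord_of_norm_Dg_sub_le_one (hγ : IsImmersedLoop γ) (hxy : x ≤ y)
    (osc : ∀ a ∈ Icc x y, ∀ b ∈ Icc x y, ‖Dg γ γ a - Dg γ γ b‖ ≤ 1) : ForwardChord γ x y := by
  have chord := hγ.norm_sub_le_arcParam_sub hxy
  have inner_left := hγ.half_arcParam_sub_le_inner hxy osc (left_mem_Icc.2 hxy)
  have inner_right := hγ.half_arcParam_sub_le_inner hxy osc (right_mem_Icc.2 hxy)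
  constructor <;> linarith

lemma ne_of_norm_Dg_sub_le_one (hγ : IsImmersedLoop γ) (hxy : x < y)
    (osc : ∀ a ∈ Icc x y, ∀ b ∈ Icc x y, ‖Dg γ γ a - Dg γ γ b‖ ≤ 1) : γ x ≠ γ y := fun heq => by
  have inner_left := hγ.half_arcParam_sub_le_inner hxy.le osc (left_mem_Icc.2 hxy.le)
  rw [heq, sub_self, inner_zero_right] at inner_left
  linarith [hγ.strictMono_arcParam hxy]

lemma norm_Dg_sub_sq_mul_le_of_forwardChord (hγ : IsImmersedLoop γ)
    (hxy : γ x ≠ γ y) (forward : ForwardChord γ x y) :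
    ‖Dg γ γ x - Dg γ γ y‖ ^ 2 * (‖deriv γ x‖ * ‖deriv γ y‖) ≤
      4 * ‖γ y - γ x‖ ^ (2 * s - 1) * (tpDensity s γ γ x y + tpDensity s γ γ y x) := by
  have hr : 0 < ‖γ y - γ x‖ := norm_sub_pos_iff.2 hxy.symm
  have turning := norm_sq_mul_norm_sub_sq_le (hγ.norm_Dg_self x) (hγ.norm_Dg_self y)
    ((half_pos hr).le.trans forward.1) ((half_pos hr).le.trans forward.2)
  have power : ‖γ y - γ x‖ ^ (2 * s + 1) = ‖γ y - γ x‖ ^ (2 * s - 1) * ‖γ y - γ x‖ ^ 2 := by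
    rw [← Real.rpow_ofNat, ← Real.rpow_add hr]
    ring_nf
  have pos : 0 < ‖γ y - γ x‖ ^ (2 * s - 1) := by positivity
  rw [tpDensity_eq hxy, tpDensity_swap_eq hxy, power, ← add_mul, ← add_div,
    ← mul_assoc (4 * _)]
  refine mul_le_mul_of_nonneg_right ?_ (by positivity)
  rw [mul_assoc 4, mul_div_assoc', mul_div_mul_left _ _ pos.ne', mul_div_assoc',
    le_div_iff₀ (by positivity), mul_comm]
  exact turning

lemma norm_Dg_sub_sq_mul_le (hγ : IsImmersedLoop γ) (hs : 1 / 2 ≤ s)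
    (osc : ∀ a ∈ Icc c d, ∀ b ∈ Icc c d, ‖Dg γ γ a - Dg γ γ b‖ ≤ 1)
    (hx : x ∈ Icc c d) (hy : y ∈ Icc c d) :
    ‖Dg γ γ x - Dg γ γ y‖ ^ 2 * (‖deriv γ x‖ * ‖deriv γ y‖) ≤
      4 * (arcParam γ d - arcParam γ c) ^ (2 * s - 1) *
        (tpDensity s γ γ x y + tpDensity s γ γ y x) := by
  wlog hxy : x ≤ y generalizing x y
  · rw [norm_sub_rev, mul_comm ‖deriv γ x‖, add_comm]
    exact this hy hx (le_of_not_ge hxy)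
  have nonneg := add_nonneg (tpDensity_nonneg s γ γ x y) (tpDensity_nonneg s γ γ y x)
  have monotone := hγ.strictMono_arcParam.monotone
  rcases hxy.eq_or_lt with rfl | hlt
  · have := sub_nonneg.2 (monotone (hx.1.trans hx.2))
    rw [sub_self, norm_zero, zero_pow two_ne_zero, zero_mul]
    positivity
  have osc_xy : ∀ a ∈ Icc x y, ∀ b ∈ Icc x y, ‖Dg γ γ a - Dg γ γ b‖ ≤ 1 := fun a ha b hb =>
    osc a (Icc_subset_Icc hx.1 hy.2 ha) b (Icc_subset_Icc hx.1 hy.2 hb)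
  refine (hγ.norm_Dg_sub_sq_mul_le_of_forwardChord (s := s)
    (hγ.ne_of_norm_Dg_sub_le_one hlt osc_xy)
    (hγ.forwardChord_of_norm_Dg_sub_le_one hxy osc_xy)).trans ?_
  have chord_le : ‖γ y - γ x‖ ≤ arcParam γ d - arcParam γ c :=
    (hγ.norm_sub_le_arcParam_sub hxy).trans (sub_le_sub (monotone hy.2) (monotone hx.1))
  gcongr
  linarith

lemma lintegral_enorm_Dg_sub_sq_le (hγ : IsImmersedLoop γ) (hs : 1 / 2 ≤ s) (hcd : c ≤ d)
    (hd : d ≤ c + 1) (osc : ∀ a ∈ Icc c d, ∀ b ∈ Icc c d, ‖Dg γ γ a - Dg γ γ b‖ ≤ 1) :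
    ∫⁻ x in Icc c d, ENNReal.ofReal ‖deriv γ x‖ *
        ∫⁻ y in Icc c d, ENNReal.ofReal ‖deriv γ y‖ * ‖Dg γ γ x - Dg γ γ y‖ₑ ^ 2 ≤
      ENNReal.ofReal (4 * (arcParam γ d - arcParam γ c) ^ (2 * s - 1)) * (2 * EtpE s γ) := by
  set R := 4 * (arcParam γ d - arcParam γ c) ^ (2 * s - 1)
  have R_nonneg : 0 ≤ R := by
    have := sub_nonneg.2 (hγ.strictMono_arcParam.monotone hcd)
    positivity
  let e : ℝ → ℝ → ℝ≥0∞ := fun x y => ENNReal.ofReal (tpDensity s γ γ x y)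
  have e_meas : Measurable (Function.uncurry e) :=
    (measurable_uncurry_tpDensity hγ.contDiff.continuous.measurable
      hγ.contDiff.continuous.measurable).ennreal_ofReal
  have pointwise : ∀ x ∈ Icc c d, ∀ y ∈ Icc c d,
      ENNReal.ofReal ‖deriv γ x‖ * (ENNReal.ofReal ‖deriv γ y‖ * ‖Dg γ γ x - Dg γ γ y‖ₑ ^ 2) ≤
        ENNReal.ofReal R * (e x y + e y x) := fun x hx y hy => by
    rw [← ofReal_norm, ← ENNReal.ofReal_pow (norm_nonneg _), ← ENNReal.ofReal_mul (norm_nonneg _),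
      ← ENNReal.ofReal_mul (norm_nonneg _),
      ← ENNReal.ofReal_add (tpDensity_nonneg ..) (tpDensity_nonneg ..),
      ← ENNReal.ofReal_mul R_nonneg, ← mul_assoc, mul_comm]
    exact ENNReal.ofReal_le_ofReal (hγ.norm_Dg_sub_sq_mul_le hs osc hx hy)
  have right_periodic := periodic_tpDensity_right (s := s) hγ.periodic hγ.periodic
  have left_periodic := periodic_tpDensity_left (s := s) hγ.periodic hγ.periodic
  simp_rw [← lintegral_const_mul' _ _ ENNReal.ofReal_ne_top]
  calc _ ≤ ∫⁻ x in Icc c d, ∫⁻ y in Icc c d, ENNReal.ofReal R * (e x y + e y x) :=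
        setLIntegral_mono' measurableSet_Icc fun x hx =>
          setLIntegral_mono' measurableSet_Icc (pointwise x hx)
    _ = ENNReal.ofReal R * ∫⁻ x in Icc c d, ∫⁻ y in Icc c d, (e x y + e y x) := by
        simp_rw [lintegral_const_mul' _ _ ENNReal.ofReal_ne_top]
    _ ≤ ENNReal.ofReal R * ∫⁻ x in I01, ∫⁻ y in I01, (e x y + e y x) := by
        gcongr _ * ?_
        refine lintegral_lintegral_Icc_le_lintegral_lintegral_I01 (fun x y => ?_) (fun y x => ?_) hd
        · simp only [e, right_periodic x y, left_periodic x y]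
        · simp only [e, right_periodic y x, left_periodic y x]
    _ = ENNReal.ofReal R * (2 * EtpE s γ) := by
        rw [lintegral_lintegral_add_swap e_meas.aemeasurable, EtpE_eq_lintegral_tpDensity]

end IsImmersedLoop

/-- The constant of the Hölder estimate for the unit tangent, inherited from the Campanato
characterization with exponent `s - 3 / 2`. -/
def tangentHolderConst (s : ℝ) : ℝ := 128 / (1 - (1 / 2 : ℝ) ^ (s - 3 / 2)) ^ 2

lemma tangentHolderConst_pos (hs : 3 / 2 < s) : 0 < tangentHolderConst s := by
  have : (1 / 2 : ℝ) ^ (s - 3 / 2) < 1 :=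
    Real.rpow_lt_one (by norm_num) (by norm_num) (sub_pos.2 hs)
  have := sub_pos.2 this
  unfold tangentHolderConst
  positivity

namespace IsImmersedLoop

variable {x y c d : ℝ}

lemma norm_Dg_sub_sq_le (hγ : IsImmersedLoop γ) (hs : 3 / 2 < s) (hE : EtpE s γ ≠ ∞)
    (hcd : c < d) (hd : d ≤ c + 1)
    (osc : ∀ a ∈ Icc c d, ∀ b ∈ Icc c d, ‖Dg γ γ a - Dg γ γ b‖ ≤ 1) :
    ‖Dg γ γ c - Dg γ γ d‖ ^ 2 ≤
      tangentHolderConst s * Etp s γ * (arcParam γ d - arcParam γ c) ^ (2 * (s - 3 / 2)) := by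
  let T : ℝ → En n := fun σ => Dg γ γ (hγ.arcParamIso.symm σ)
  have T_arcParam : ∀ t, T (arcParam γ t) = Dg γ γ t := fun t =>
    congrArg (Dg γ γ) (hγ.arcParamIso.symm_apply_apply t)
  have T_continuous : Continuous T :=
    (hγ.continuous_Dg hγ.continuous_deriv).comp hγ.arcParamIso.symm.continuous
  have campanato := norm_sub_sq_le_of_lintegral_le (M := 8 * Etp s γ) T_continuous
    (sub_pos.2 hs) (mul_nonneg (by norm_num) ENNReal.toReal_nonneg) (hγ.strictMono_arcParam hcd)
    fun σ τ hcσ hστ hτd => by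
      obtain ⟨c', rfl⟩ := hγ.surjective_arcParam σ
      obtain ⟨d', rfl⟩ := hγ.surjective_arcParam τ
      rw [hγ.strictMono_arcParam.le_iff_le] at hcσ hτd
      rw [hγ.strictMono_arcParam.lt_iff_lt] at hστ
      have energy_bound := hγ.lintegral_enorm_Dg_sub_sq_le (s := s) (by linarith) hστ.le
        (by linarith) fun a ha b hb =>
          osc a (Icc_subset_Icc hcσ hτd ha) b (Icc_subset_Icc hcσ hτd hb)
      rw [hγ.lintegral_lintegral_Icc_comp_arcParamIso_symm
        (fun x y => ‖Dg γ γ x - Dg γ γ y‖ₑ ^ 2)]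
      refine energy_bound.trans_eq ?_
      have := sub_nonneg.2 (hγ.strictMono_arcParam.monotone hστ.le)
      rw [← ENNReal.ofReal_toReal hE, ← Etp, ← ENNReal.ofReal_ofNat 2,
        ← ENNReal.ofReal_mul zero_le_two, ← ENNReal.ofReal_mul (by positivity)]
      ring_nf
  rw [T_arcParam, T_arcParam] at campanato
  refine campanato.trans_eq ?_
  rw [tangentHolderConst]
  ring

lemma forwardChord_or_one_le (hγ : IsImmersedLoop γ) (hs : 3 / 2 < s) (hE : EtpE s γ ≠ ∞)
    (hxy : x < y) :
    ForwardChord γ x y ∨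
      1 ≤ tangentHolderConst s * Etp s γ *
        (arcParam γ y - arcParam γ x) ^ (2 * (s - 3 / 2)) := by
  by_cases osc : ∀ a ∈ Icc x (min y (x + 1)), ∀ b ∈ Icc x (min y (x + 1)),
      ‖Dg γ γ a - Dg γ γ b‖ ≤ 1
  · left
    -- A full turn of the loop has chord `0`, so the tangent cannot stay almost constant on it.
    have hy : y ≤ x + 1 := by
      by_contra! hlt
      rw [min_eq_right hlt.le] at osc
      exact hγ.ne_of_norm_Dg_sub_le_one (lt_add_one x) osc (hγ.periodic x).symm
    rw [min_eq_left hy] at osc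
    exact hγ.forwardChord_of_norm_Dg_sub_le_one hxy.le osc
  · right
    push Not at osc
    obtain ⟨a, ha, b, hb, hab⟩ := osc
    wlog hle : a ≤ b generalizing a b
    · exact this b hb a ha (norm_sub_rev (Dg γ γ a) _ ▸ hab) (le_of_not_ge hle)
    obtain ⟨c, d, hxc, hcd, hdy, dist_eq_one, osc_cd⟩ := exists_Icc_dist_eq_of_lt_dist
      (hγ.continuous_Dg hγ.continuous_deriv) one_pos ha.1 hle hb.2 (dist_eq_norm _ (Dg γ γ b) ▸ hab)
    simp only [dist_eq_norm] at dist_eq_one osc_cd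
    have holder := hγ.norm_Dg_sub_sq_le hs hE hcd (by linarith [hdy.trans (min_le_right _ _)])
      osc_cd
    rw [dist_eq_one, one_pow] at holder
    have monotone := hγ.strictMono_arcParam.monotone
    have := sub_nonneg.2 (monotone hcd.le)
    have := sub_nonneg.2 hs.le
    have := tangentHolderConst_pos hs
    have : 0 ≤ Etp s γ := ENNReal.toReal_nonneg
    refine holder.trans ?_
    gcongr
    · exact monotone (hdy.trans (min_le_left _ _))
    · exact monotone hxc

lemma one_le_mul_arcDist_rpow (hγ : IsImmersedLoop γ) (hs : 3 / 2 < s) (hE : EtpE s γ ≠ ∞)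
    (hxy : γ x ≠ γ y) (not_forward : ¬ ForwardChord γ x y) (not_backward : ¬ ForwardChord γ y x) :
    1 ≤ (tangentHolderConst s * Etp s γ) ^ ((s - 3 / 2 + 1) / (s - 3 / 2)) *
      arcDist γ x y ^ (2 * s - 1) := by
  have hα : 0 < s - 3 / 2 := sub_pos.2 hs
  set a := tangentHolderConst s * Etp s γ
  have ha0 : 0 ≤ a := mul_nonneg (tangentHolderConst_pos hs).le ENNReal.toReal_nonneg
  have every_arc : ∀ k : ℤ, 1 ≤ a * |∫ t in x..(y + k), ‖deriv γ t‖| ^ (2 * (s - 3 / 2)) :=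
    fun k => by
      have γ_shift : γ (y + k) = γ y := periodic_add_intCast hγ.periodic y k
      have T_shift : Dg γ γ (y + k) = Dg γ γ y :=
        periodic_add_intCast (hγ.periodic_Dg hγ.periodic) y k
      have shift_ne : x ≠ y + k := fun h => hxy (h ▸ γ_shift)
      rw [hγ.integral_norm_deriv]
      rcases shift_ne.lt_or_gt with hlt | hgt
      · rw [abs_of_pos (sub_pos.2 (hγ.strictMono_arcParam hlt))]
        refine (hγ.forwardChord_or_one_le hs hE hlt).resolve_left ?_
        rwa [ForwardChord, γ_shift, T_shift]
      · rw [abs_sub_comm, abs_of_pos (sub_pos.2 (hγ.strictMono_arcParam hgt))]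
        refine (hγ.forwardChord_or_one_le hs hE hgt).resolve_left ?_
        rwa [ForwardChord, γ_shift, T_shift]
  have hd : 0 ≤ arcDist γ x y := (norm_nonneg _).trans (hγ.norm_sub_le_arcDist x y)
  have shortest_arc : 1 ≤ a * arcDist γ x y ^ (2 * (s - 3 / 2)) :=
    have closed : IsClosed {t : ℝ | 1 ≤ a * t ^ (2 * (s - 3 / 2))} := isClosed_le continuous_const
      (continuous_const.mul (Real.continuous_rpow_const (by positivity)))
    closed.closure_subset_iff.2 (range_subset_iff.2 every_arc)
      (csInf_mem_closure (range_nonempty _) ⟨0, forall_mem_range.2 fun _ => abs_nonneg _⟩)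
  have exponent : 2 * (s - 3 / 2) * ((s - 3 / 2 + 1) / (s - 3 / 2)) = 2 * s - 1 := by
    rw [mul_assoc, mul_div_cancel₀ _ hα.ne']
    ring
  have := Real.one_le_rpow shortest_arc (z := (s - 3 / 2 + 1) / (s - 3 / 2)) (by positivity)
  rwa [Real.mul_rpow ha0 (by positivity), ← Real.rpow_mul hd, exponent] at this

end IsImmersedLoop

end TangentOscillation

section FirstOrderRemainder

variable {E : Type*} [NormedAddCommGroup E] {f v : ℝ → E}

lemma exists_forall_norm_le_of_periodic (hv : Continuous v)
    (hper : Function.Periodic v 1) : ∃ K : ℝ, ∀ x, ‖v x‖ ≤ K := by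
  obtain ⟨K, hK⟩ := (hper.isBounded_of_continuous one_ne_zero hv).exists_norm_le
  exact ⟨K, fun x => hK _ (mem_range_self x)⟩

/-- The kernel `‖v(x + h) - v(x)‖² / |h|ᵖ` of the Gagliardo seminorm, in coordinates centred at
`x`. -/
def gagliardoKernel (p : ℝ) (v : ℝ → E) (x h : ℝ) : ℝ≥0∞ :=
  ‖v (x + h) - v x‖ₑ ^ 2 * ENNReal.ofReal (|h| ^ (-p))

lemma lintegral_gagliardoKernel_dilation_le {p : ℝ} (hp : 1 ≤ p) (v : ℝ → E) (x : ℝ) {a b θ : ℝ}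
    (ha : a ≤ 0) (hb : 0 ≤ b) (hθ : θ ∈ Ioc (0 : ℝ) 1) :
    ∫⁻ h in Ioc a b, ‖v (x + h * θ) - v x‖ₑ ^ 2 * ENNReal.ofReal (|h| ^ (-p)) ≤
      ∫⁻ h in Ioc a b, gagliardoKernel p v x h := by
  have weight : ∀ h : ℝ, |h| ^ (-p) ≤ θ * |θ * h| ^ (-p) := fun h => by
    have one_le : 1 ≤ θ ^ (1 + -p) :=
      Real.one_le_rpow_of_pos_of_le_one_of_nonpos hθ.1 hθ.2 (by linarith)
    rw [Real.rpow_add hθ.1, Real.rpow_one] at one_le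
    rw [abs_mul, abs_of_pos hθ.1, Real.mul_rpow hθ.1.le (abs_nonneg h), ← mul_assoc]
    exact le_mul_of_one_le_left (by positivity) one_le
  calc ∫⁻ h in Ioc a b, ‖v (x + h * θ) - v x‖ₑ ^ 2 * ENNReal.ofReal (|h| ^ (-p))
      ≤ ∫⁻ h in Ioc a b, ENNReal.ofReal θ * gagliardoKernel p v x (θ * h) := by
        refine lintegral_mono fun h => ?_
        rw [gagliardoKernel, mul_left_comm, ← ENNReal.ofReal_mul hθ.1.le, mul_comm h]
        gcongr
        exact weight h
    _ = ∫⁻ h in Ioc (θ * a) (θ * b), gagliardoKernel p v x h := by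
        rw [lintegral_const_mul' _ _ ENNReal.ofReal_ne_top, lintegral_Ioc_const_mul _ _ _ hθ.1]
    _ ≤ ∫⁻ h in Ioc a b, gagliardoKernel p v x h :=
        lintegral_mono_set (Ioc_subset_Ioc (by nlinarith [hθ.2]) (by nlinarith [hθ.2]))

variable [NormedSpace ℝ E]

/-- The mean of `f'` over the segment from `x` to `x + h`. It is the difference quotient of `f`
for `h ≠ 0`, and extends it continuously to `h = 0`. -/
def meanDeriv (f : ℝ → E) (x h : ℝ) : E := ∫ θ in (0 : ℝ)..1, deriv f (x + h * θ)

lemma smul_meanDeriv [CompleteSpace E] (hf : ContDiff ℝ 1 f) (x h : ℝ) :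
    h • meanDeriv f x h = f (x + h) - f x := by
  rw [meanDeriv, intervalIntegral.smul_integral_comp_add_mul, sub_eq_integral_deriv hf, mul_zero,
    add_zero, mul_one]

lemma meanDeriv_zero [CompleteSpace E] (f : ℝ → E) (x : ℝ) : meanDeriv f x 0 = deriv f x := by
  simp [meanDeriv]

lemma continuous_uncurry_meanDeriv (hf : ContDiff ℝ 1 f) :
    Continuous (Function.uncurry (meanDeriv f)) := by
  have := hf.continuous_deriv le_rfl
  refine intervalIntegral.continuous_parametric_intervalIntegral_of_continuous'
    (f := fun (z : ℝ × ℝ) θ => deriv f (z.1 + z.2 * θ)) ?_ 0 1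
  unfold Function.uncurry
  fun_prop

lemma periodic_meanDeriv {c : ℝ} (hf : Function.Periodic f c) (h : ℝ) :
    Function.Periodic (fun x => meanDeriv f x h) c := fun x => by
  simp only [meanDeriv, add_right_comm x c, periodic_deriv hf _]

/-- The weighted first-order Taylor remainder `‖f(x + h) - f(x) - h f'(x)‖² / |h|ᵖ`. -/
def taylorKernel (p : ℝ) (f : ℝ → E) (x h : ℝ) : ℝ≥0∞ :=
  ‖f (x + h) - f x - h • deriv f x‖ₑ ^ 2 * ENNReal.ofReal (|h| ^ (-p))

lemma measurable_uncurry_taylorKernel (p : ℝ) (hf : ContDiff ℝ 1 f) :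
    Measurable (Function.uncurry (taylorKernel p f)) := by
  have := hf.continuous_deriv le_rfl
  have := hf.continuous
  have remainder : Continuous fun z : ℝ × ℝ =>
      ‖f (z.1 + z.2) - f z.1 - z.2 • deriv f z.1‖ₑ := by
    fun_prop
  exact (remainder.measurable.pow_const 2).mul (by fun_prop)

lemma enorm_taylor_remainder_sq_le [CompleteSpace E] (hf : ContDiff ℝ 1 f) (x h : ℝ) :
    ‖f (x + h) - f x - h • deriv f x‖ₑ ^ 2 ≤
      ENNReal.ofReal (h ^ 2) * ∫⁻ θ in Ioc (0 : ℝ) 1, ‖deriv f (x + h * θ) - deriv f x‖ₑ ^ 2 := by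
  have := hf.continuous_deriv le_rfl
  have remainder : f (x + h) - f x - h • deriv f x =
      h • ∫ θ in Ioc (0 : ℝ) 1, (deriv f (x + h * θ) - deriv f x) := by
    rw [← intervalIntegral.integral_of_le zero_le_one, intervalIntegral.integral_sub
      (Continuous.intervalIntegrable (by fun_prop) _ _) intervalIntegrable_const, smul_sub,
      ← meanDeriv, smul_meanDeriv hf, intervalIntegral.integral_const, sub_zero, one_smul]
  have : IsProbabilityMeasure ((volume : Measure ℝ).restrict (Ioc (0 : ℝ) 1)) := ⟨by simp⟩
  rw [remainder, enorm_smul, mul_pow, ← ofReal_norm h, ← ENNReal.ofReal_pow (norm_nonneg h),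
    Real.norm_eq_abs, sq_abs]
  gcongr
  refine (pow_le_pow_left' (enorm_integral_le_lintegral_enorm _) 2).trans ?_
  exact sq_lintegral_le_lintegral_sq _ (Continuous.aemeasurable (by fun_prop))

lemma lintegral_taylorKernel_le [CompleteSpace E] {p : ℝ} (hp : 1 ≤ p) (hf : ContDiff ℝ 1 f)
    (x : ℝ) {a b : ℝ} (ha : a ≤ 0) (hb : 0 ≤ b) :
    ∫⁻ h in Ioc a b, taylorKernel (p + 2) f x h ≤
      ∫⁻ h in Ioc a b, gagliardoKernel p (deriv f) x h := by
  have := hf.continuous_deriv le_rfl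
  have weight : ∀ h : ℝ, h ^ 2 * |h| ^ (-(p + 2)) = |h| ^ (-p) := fun h => by
    have exponent_ne : (2 : ℝ) + -(p + 2) ≠ 0 := by linarith
    rw [← sq_abs, ← Real.rpow_ofNat, ← Real.rpow_add' (abs_nonneg h) exponent_ne]
    ring_nf
  have measurable : Measurable (Function.uncurry fun h θ : ℝ =>
      ‖deriv f (x + h * θ) - deriv f x‖ₑ ^ 2 * ENNReal.ofReal (|h| ^ (-p))) := by
    have increment : Continuous fun z : ℝ × ℝ => ‖deriv f (x + z.1 * z.2) - deriv f x‖ₑ := by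
      fun_prop
    exact (increment.measurable.pow_const 2).mul (by fun_prop)
  calc ∫⁻ h in Ioc a b, taylorKernel (p + 2) f x h
      ≤ ∫⁻ h in Ioc a b, ∫⁻ θ in Ioc (0 : ℝ) 1,
          ‖deriv f (x + h * θ) - deriv f x‖ₑ ^ 2 * ENNReal.ofReal (|h| ^ (-p)) := by
        refine lintegral_mono fun h => ?_
        rw [lintegral_mul_const' _ _ ENNReal.ofReal_ne_top, ← weight,
          ENNReal.ofReal_mul (sq_nonneg h), ← mul_assoc, mul_comm (lintegral _ _)]
        exact mul_le_mul_left (enorm_taylor_remainder_sq_le hf x h) _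
    _ = ∫⁻ θ in Ioc (0 : ℝ) 1, ∫⁻ h in Ioc a b,
          ‖deriv f (x + h * θ) - deriv f x‖ₑ ^ 2 * ENNReal.ofReal (|h| ^ (-p)) :=
        lintegral_lintegral_swap measurable.aemeasurable
    _ ≤ ∫⁻ _ in Ioc (0 : ℝ) 1, ∫⁻ h in Ioc a b, gagliardoKernel p (deriv f) x h :=
        setLIntegral_mono' measurableSet_Ioc fun θ hθ =>
          lintegral_gagliardoKernel_dilation_le hp (deriv f) x ha hb hθ
    _ = ∫⁻ h in Ioc a b, gagliardoKernel p (deriv f) x h := by simp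

end FirstOrderRemainder

section CircleDistance

lemma dT_add_eq_abs {h : ℝ} (hh : |h| ≤ 1 / 2) (x : ℝ) : dT x (x + h) = |h| := by
  have bddBelow : BddBelow (range fun k : ℤ => |x - (x + h) - (k : ℝ)|) :=
    ⟨0, forall_mem_range.2 fun k => abs_nonneg _⟩
  refine le_antisymm ((ciInf_le bddBelow 0).trans_eq (by simp)) (le_ciInf fun k => ?_)
  obtain rfl | hk := eq_or_ne k 0
  · simp
  · have one_le : (1 : ℝ) ≤ |(k : ℝ)| := by exact_mod_cast Int.one_le_abs hk
    have triangle : |(k : ℝ)| - |-h| ≤ |(k : ℝ) - -h| := abs_sub_abs_le_abs_sub _ _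
    rw [abs_neg, abs_sub_comm] at triangle
    rw [sub_add_cancel_left]
    linarith

lemma periodic_dT (x : ℝ) : Function.Periodic (dT x) 1 := fun y =>
  (Equiv.addRight (1 : ℤ)).iInf_congr fun k => by
    rw [Equiv.coe_addRight]
    push_cast
    ring_nf

lemma gagliardoSqE_eq_lintegral_gagliardoKernel {E : Type*} [NormedAddCommGroup E]
    (σ : ℝ) {v : ℝ → E} (hv : Function.Periodic v 1) :
    gagliardoSqE σ v =
      ∫⁻ x in I01, ∫⁻ h in Ioc (-1 / 2 : ℝ) (1 / 2), gagliardoKernel (2 * σ + 1) v x h := by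
  refine lintegral_congr fun x => ?_
  rw [lintegral_I01_eq_lintegral_centered (fun y => by simp only [hv y, periodic_dT x y]) x]
  refine setLIntegral_congr_fun measurableSet_Ioc fun h hh => ?_
  rw [dT_add_eq_abs (abs_le.2 ⟨by linarith [hh.1], hh.2⟩), gagliardoKernel, ← ofReal_norm,
    ← ENNReal.ofReal_pow (norm_nonneg _), ← ENNReal.ofReal_mul (sq_nonneg _),
    Real.rpow_neg (abs_nonneg h), div_eq_mul_inv]

lemma exists_intCast_of_eq {β : Type*} {g : ℝ → β} (hper : Function.Periodic g 1)
    (hinj : Set.InjOn g I01) {x y : ℝ} (hxy : g x = g y) : ∃ k : ℤ, x - y = k := by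
  have fract_eq : ∀ z, g z = g (Int.fract z) := fun z => by
    rw [← periodic_add_intCast hper (Int.fract z) ⌊z⌋, Int.fract_add_floor]
  rw [fract_eq x, fract_eq y] at hxy
  exact Int.fract_eq_fract.1 (hinj ⟨Int.fract_nonneg x, Int.fract_lt_one x⟩
    ⟨Int.fract_nonneg y, Int.fract_lt_one y⟩ hxy)

end CircleDistance

section FiniteEnergy

variable {n : ℕ} {s : ℝ} {γ u : ℝ → En n} {x h : ℝ}

namespace IsImmersedLoop

lemma meanDeriv_ne_zero (hγ : IsImmersedLoop γ) (hinj : Set.InjOn γ I01) (hh : |h| ≤ 1 / 2) :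
    meanDeriv γ x h ≠ 0 := fun vanishes => by
  have closes_up : γ (x + h) = γ x := by
    rw [← sub_eq_zero, ← smul_meanDeriv hγ.contDiff, vanishes, smul_zero]
  obtain ⟨k, hk⟩ := exists_intCast_of_eq hγ.periodic hinj closes_up
  rw [add_sub_cancel_left] at hk
  have abs_k : |(k : ℝ)| < 1 := by linarith [hk ▸ hh]
  have k_eq_zero : k = 0 := Int.abs_lt_one_iff.1 (by exact_mod_cast abs_k)
  rw [hk, k_eq_zero, Int.cast_zero, meanDeriv_zero] at vanishes
  exact hγ.deriv_ne_zero x vanishes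

lemma exists_pos_forall_le_norm_meanDeriv (hγ : IsImmersedLoop γ) (hinj : Set.InjOn γ I01) :
    ∃ c : ℝ, 0 < c ∧ ∀ x h, |h| ≤ 1 / 2 → c ≤ ‖meanDeriv γ x h‖ := by
  obtain ⟨z, hz, hmin⟩ := (isCompact_Icc.prod isCompact_Icc : IsCompact
    (Icc (0 : ℝ) 1 ×ˢ Icc (-(1 / 2) : ℝ) (1 / 2))).exists_isMinOn
    ⟨(0, 0), by constructor <;> norm_num⟩
    (continuous_uncurry_meanDeriv hγ.contDiff).norm.continuousOn
  refine ⟨‖meanDeriv γ z.1 z.2‖, norm_pos_iff.2 (hγ.meanDeriv_ne_zero hinj (abs_le.2 hz.2)),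
    fun x h hh => ?_⟩
  obtain ⟨x', hx', hxx'⟩ := (periodic_meanDeriv hγ.periodic h).exists_mem_Ico₀ one_pos x
  rw [hxx']
  exact isMinOn_iff.1 hmin (x', h) ⟨Ico_subset_Icc_self hx', abs_le.1 hh⟩

lemma exists_pos_forall_mul_abs_le (hγ : IsImmersedLoop γ) (hinj : Set.InjOn γ I01) :
    ∃ c : ℝ, 0 < c ∧ ∀ x h, |h| ≤ 1 / 2 → c * |h| ≤ ‖γ (x + h) - γ x‖ := by
  obtain ⟨c, hc, hle⟩ := hγ.exists_pos_forall_le_norm_meanDeriv hinj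
  refine ⟨c, hc, fun x h hh => ?_⟩
  rw [← smul_meanDeriv hγ.contDiff, norm_smul, Real.norm_eq_abs, mul_comm]
  gcongr
  exact hle x h hh

lemma sub_sub_inner_smul_Dg (hγ : IsImmersedLoop γ) (u : ℝ → En n) (x h : ℝ) :
    u (x + h) - u x - ⟪Dg γ γ x, γ (x + h) - γ x⟫ • Dg γ u x =
      (u (x + h) - u x - h • deriv u x) -
        ⟪Dg γ γ x, γ (x + h) - γ x - h • deriv γ x⟫ • Dg γ u x := by
  have tangential : ⟪Dg γ γ x, h • deriv γ x⟫ = h * ‖deriv γ x‖ := by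
    rw [← hγ.norm_deriv_smul_Dg γ x, real_inner_smul_right, real_inner_smul_right,
      real_inner_self_eq_norm_sq, norm_smul, norm_norm, hγ.norm_Dg_self]
    ring
  rw [inner_sub_right _ _ (h • deriv γ x), tangential, ← hγ.norm_deriv_smul_Dg u x]
  module

lemma tpDensity_add_le (hγ : IsImmersedLoop γ) (hs : -1 / 2 ≤ s) {c K L : ℝ} (hc : 0 < c)
    (h0 : h ≠ 0) (chord : c * |h| ≤ ‖γ (x + h) - γ x‖) (hK : ∀ y, ‖deriv γ y‖ ≤ K)
    (hL : ‖Dg γ u x‖ ≤ L) :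
    tpDensity s γ u x (x + h) ≤ 2 * (1 + L ^ 2) * c ^ (-(2 * s + 1)) * K ^ 2 *
      ((‖u (x + h) - u x - h • deriv u x‖ ^ 2 + ‖γ (x + h) - γ x - h • deriv γ x‖ ^ 2) *
        |h| ^ (-(2 * s + 1))) := by
  have abs_pos := abs_pos.2 h0
  have ne : γ x ≠ γ (x + h) := fun heq => by
    rw [heq, sub_self, norm_zero] at chord
    exact (mul_pos hc abs_pos).not_ge chord
  have chord_power :
      (‖γ (x + h) - γ x‖ ^ (2 * s + 1))⁻¹ ≤ c ^ (-(2 * s + 1)) * |h| ^ (-(2 * s + 1)) := by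
    rw [← Real.rpow_neg (norm_nonneg _), ← Real.mul_rpow hc.le abs_pos.le]
    exact Real.rpow_le_rpow_of_nonpos (by positivity) chord (by linarith)
  rw [tpDensity_eq ne, hγ.sub_sub_inner_smul_Dg, div_eq_mul_inv]
  calc _ ≤ (2 * (1 + L ^ 2) * (‖u (x + h) - u x - h • deriv u x‖ ^ 2 +
            ‖γ (x + h) - γ x - h • deriv γ x‖ ^ 2)) *
          (c ^ (-(2 * s + 1)) * |h| ^ (-(2 * s + 1))) * (K * K) := by
        gcongr
        · exact norm_sub_inner_smul_sq_le (hγ.norm_Dg_self x) hL _ _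
        · exact (norm_nonneg _).trans (hK x)
        · exact hK x
        · exact hK (x + h)
    _ = _ := by ring

lemma exists_tpDensity_add_le_taylorKernel (hγ : IsImmersedLoop γ) (hinj : Set.InjOn γ I01)
    (hs : -1 / 2 ≤ s) (hu : Continuous (deriv u)) (hper : Function.Periodic u 1) :
    ∃ A : ℝ, ∀ x h, |h| ≤ 1 / 2 → ENNReal.ofReal (tpDensity s γ u x (x + h)) ≤
      ENNReal.ofReal A * (taylorKernel (2 * s + 1) u x h + taylorKernel (2 * s + 1) γ x h) := by
  obtain ⟨c, hc, chord⟩ := hγ.exists_pos_forall_mul_abs_le hinj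
  obtain ⟨K, hK⟩ := exists_forall_norm_le_of_periodic hγ.continuous_deriv
    (periodic_deriv hγ.periodic)
  obtain ⟨L, hL⟩ := exists_forall_norm_le_of_periodic (hγ.continuous_Dg hu) (hγ.periodic_Dg hper)
  refine ⟨2 * (1 + L ^ 2) * c ^ (-(2 * s + 1)) * K ^ 2, fun x h hh => ?_⟩
  obtain rfl | h0 := eq_or_ne h 0
  · simp [tpDensity, muW]
  · refine (ENNReal.ofReal_le_ofReal
      (hγ.tpDensity_add_le hs hc h0 (chord x h hh) hK (hL x))).trans_eq ?_
    rw [ENNReal.ofReal_mul (by positivity), ENNReal.ofReal_mul (by positivity) (p := _ + _),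
      ENNReal.ofReal_add (by positivity) (by positivity), ENNReal.ofReal_pow (norm_nonneg _),
      ENNReal.ofReal_pow (norm_nonneg _), ofReal_norm, ofReal_norm, add_mul, taylorKernel,
      taylorKernel]

end IsImmersedLoop

lemma InHs.lintegral_taylorKernel_lt_top (hu : InHs s u) (hs : 1 ≤ s) :
    ∫⁻ x in I01, ∫⁻ h in Ioc (-1 / 2 : ℝ) (1 / 2), taylorKernel (2 * s + 1) u x h < ∞ := by
  refine lt_of_le_of_lt (lintegral_mono fun x => ?_)
    (gagliardoSqE_eq_lintegral_gagliardoKernel (s - 1) (periodic_deriv hu.1) ▸ hu.2.2)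
  rw [show 2 * s + 1 = 2 * (s - 1) + 1 + 2 by ring]
  exact lintegral_taylorKernel_le (by linarith) hu.2.1 x (by norm_num) (by norm_num)

/-- Lebesgue measure on the fundamental domain of the circle. -/
abbrev circleMeasure : Measure ℝ := volume.restrict I01

namespace InM

lemma lintegral_tpDensity_lt_top (hγ : InM s γ) (hu : InHs s u) (hs : 1 ≤ s) :
    ∫⁻ x in I01, ∫⁻ y in I01, ENNReal.ofReal (tpDensity s γ u x y) < ∞ := by
  obtain ⟨A, hA⟩ := hγ.isImmersedLoop.exists_tpDensity_add_le_taylorKernel (s := s) hγ.2.1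
    (by linarith) (hu.2.1.continuous_deriv le_rfl) hu.1
  have measurable := measurable_uncurry_taylorKernel (2 * s + 1) hu.2.1
  calc ∫⁻ x in I01, ∫⁻ y in I01, ENNReal.ofReal (tpDensity s γ u x y)
      = ∫⁻ x in I01, ∫⁻ h in Ioc (-1 / 2 : ℝ) (1 / 2),
          ENNReal.ofReal (tpDensity s γ u x (x + h)) := by
        refine lintegral_congr fun x => lintegral_I01_eq_lintegral_centered ?_ x
        exact (periodic_tpDensity_right hγ.1.1 hu.1 x).comp ENNReal.ofReal
    _ ≤ ∫⁻ x in I01, ∫⁻ h in Ioc (-1 / 2 : ℝ) (1 / 2), ENNReal.ofReal A *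
          (taylorKernel (2 * s + 1) u x h + taylorKernel (2 * s + 1) γ x h) :=
        lintegral_mono fun x => setLIntegral_mono' measurableSet_Ioc fun h hh =>
          hA x h (abs_le.2 ⟨by linarith [hh.1], hh.2⟩)
    _ = ENNReal.ofReal A *
          ((∫⁻ x in I01, ∫⁻ h in Ioc (-1 / 2 : ℝ) (1 / 2), taylorKernel (2 * s + 1) u x h) +
            ∫⁻ x in I01, ∫⁻ h in Ioc (-1 / 2 : ℝ) (1 / 2), taylorKernel (2 * s + 1) γ x h) := by
        simp_rw [lintegral_const_mul' _ _ ENNReal.ofReal_ne_top,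
          lintegral_add_left measurable.of_uncurry_left]
        rw [lintegral_add_left measurable.lintegral_prod_right]
    _ < ∞ := ENNReal.mul_lt_top ENNReal.ofReal_lt_top (ENNReal.add_lt_top.2
        ⟨hu.lintegral_taylorKernel_lt_top hs, hγ.1.lintegral_taylorKernel_lt_top hs⟩)

lemma EtpE_ne_top (hγ : InM s γ) (hs : 1 ≤ s) : EtpE s γ ≠ ∞ :=
  (hγ.lintegral_tpDensity_lt_top hγ.1 hs).ne

lemma integrable_tpDensity (hγ : InM s γ) (hu : InHs s u) (hs : 1 ≤ s) :
    Integrable (Function.uncurry (tpDensity s γ u)) (circleMeasure.prod circleMeasure) :=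
  integrable_uncurry_of_lintegral_ofReal_lt_top
    (measurable_uncurry_tpDensity hγ.1.2.1.continuous.measurable hu.2.1.continuous.measurable)
    (tpDensity_nonneg s γ u) (hγ.lintegral_tpDensity_lt_top hu hs)

lemma exists_increment_ratio_le (hγ : InM s γ) (hu : InHs s u) :
    ∃ A : ℝ, ∀ x y, ‖u y - u x‖ ^ 2 / ‖γ y - γ x‖ ^ 2 ≤ A := by
  obtain ⟨c, hc, chord⟩ := hγ.isImmersedLoop.exists_pos_forall_mul_abs_le hγ.2.1
  obtain ⟨K, hK⟩ := exists_forall_norm_le_of_periodic (hu.2.1.continuous_deriv le_rfl)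
    (periodic_deriv hu.1)
  refine ⟨(K / c) ^ 2, fun x y => ?_⟩
  set h := y - x - round (y - x) with hh
  have y_eq : y = (x + h) + round (y - x) := by rw [hh]; ring
  have lipschitz : ‖u (x + h) - u x‖ ≤ K * |h| := by
    simpa using Convex.norm_image_sub_le_of_norm_deriv_le (s := univ) (x := x) (y := x + h)
      (fun z _ => (hasDerivAt_of_contDiff_one hu.2.1 z).differentiableAt) (fun z _ => hK z)
      convex_univ trivial trivial
  rw [y_eq, periodic_add_intCast hu.1, periodic_add_intCast hγ.1.1, ← div_pow]
  obtain h0 | h0 := eq_or_ne h 0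
  · rw [h0, add_zero, sub_self, norm_zero, zero_div, zero_pow two_ne_zero]
    positivity
  have abs_pos := abs_pos.2 h0
  gcongr ?_ ^ 2
  calc ‖u (x + h) - u x‖ / ‖γ (x + h) - γ x‖ ≤ (K * |h|) / (c * |h|) := by
        gcongr
        · exact mul_nonneg ((norm_nonneg _).trans (hK x)) abs_pos.le
        · exact chord x h (abs_sub_round _)
    _ = K / c := mul_div_mul_right _ _ abs_pos.ne'

lemma integrable_increment_ratio_mul_tpDensity (hγ : InM s γ) (hu : InHs s u) (hs : 1 ≤ s) :
    Integrable (Function.uncurry fun x y =>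
      ‖u y - u x‖ ^ 2 / ‖γ y - γ x‖ ^ 2 * tpDensity s γ γ x y)
      (circleMeasure.prod circleMeasure) := by
  obtain ⟨A, hA⟩ := hγ.exists_increment_ratio_le hu
  have := hγ.1.2.1.continuous.measurable
  have := hu.2.1.continuous.measurable
  have measurable : Measurable fun z : ℝ × ℝ =>
      ‖u z.2 - u z.1‖ ^ 2 / ‖γ z.2 - γ z.1‖ ^ 2 := by
    fun_prop
  exact (hγ.integrable_tpDensity hγ.1 hs).bdd_mul measurable.aestronglyMeasurable
    (.of_forall fun z => (Real.norm_of_nonneg (by positivity)).trans_le (hA z.1 z.2))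

end InM

end FiniteEnergy

section PointwiseBounds

variable {n : ℕ} {s : ℝ} {γ u : ℝ → En n} {x y : ℝ}

/-- The density of `[u]²_{H^s(γ)}` with respect to `λ ⊗ λ`. -/
def gagGammaDensity (s : ℝ) (γ u : ℝ → En n) (x y : ℝ) : ℝ :=
  ‖Dg γ u y - Dg γ u x‖ ^ 2 / arcDist γ x y ^ (2 * (s - 1)) * nuW γ x y

/-- Half of a symmetrized majorant of `gagGammaDensity`: the first two summands, the densities of
`B¹_γ(u, u)` and `B²_γ(u, u)`, control the pairs of points whose chord is aligned with both
tangents, the third one controls the remaining pairs. -/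
def gagGammaMajorant (s : ℝ) (γ u : ℝ → En n) (x y : ℝ) : ℝ :=
  16 * tpDensity s γ u x y + 32 * (‖u y - u x‖ ^ 2 / ‖γ y - γ x‖ ^ 2 * tpDensity s γ γ x y) +
    2 * (tangentHolderConst s * Etp s γ) ^ ((s - 3 / 2 + 1) / (s - 3 / 2)) *
      (‖Dg γ u x‖ ^ 2 * ‖deriv γ x‖ * ‖deriv γ y‖)

lemma gagGammaMajorant_nonneg (hs : 3 / 2 < s) (γ u : ℝ → En n) (x y : ℝ) :
    0 ≤ gagGammaMajorant s γ u x y := by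
  have := tpDensity_nonneg s γ u x y
  have := tpDensity_nonneg s γ γ x y
  have := tangentHolderConst_pos hs
  have : 0 ≤ Etp s γ := ENNReal.toReal_nonneg
  unfold gagGammaMajorant
  positivity

lemma gagGammaDensity_eq (hxy : 0 < arcDist γ x y) :
    gagGammaDensity s γ u x y =
      ‖Dg γ u y - Dg γ u x‖ ^ 2 * (‖deriv γ x‖ * ‖deriv γ y‖) / arcDist γ x y ^ (2 * s - 1) := by
  rw [gagGammaDensity, nuW, show 2 * s - 1 = 2 * (s - 1) + 1 by ring, Real.rpow_add_one hxy.ne']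
  field_simp

namespace IsImmersedLoop

lemma norm_Dg_sub_sq_div_rpow_le_of_forwardChord (hγ : IsImmersedLoop γ) (hxy : γ x ≠ γ y)
    (forward : ForwardChord γ x y) :
    ‖Dg γ u y - Dg γ u x‖ ^ 2 * (‖deriv γ x‖ * ‖deriv γ y‖) / ‖γ y - γ x‖ ^ (2 * s - 1) ≤
      16 * (tpDensity s γ u x y + tpDensity s γ u y x) +
        32 * (‖u y - u x‖ ^ 2 / ‖γ y - γ x‖ ^ 2) *
          (tpDensity s γ γ x y + tpDensity s γ γ y x) := by
  set r := ‖γ y - γ x‖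
  have hr : 0 < r := norm_sub_pos_iff.2 hxy.symm
  have projection_le : ∀ z, ⟪Dg γ γ z, γ y - γ x⟫ ≤ r := fun z =>
    (real_inner_le_norm _ _).trans_eq (by rw [hγ.norm_Dg_self, one_mul])
  have chord_bound := sq_mul_norm_sub_sq_le (u y - u x) (Dg γ u x) (Dg γ u y) hr
    forward.1 forward.2 (projection_le x) (projection_le y)
  rw [← norm_sub_inner_smul_sq (hγ.norm_Dg_self x),
    ← norm_sub_inner_smul_sq (hγ.norm_Dg_self y)] at chord_bound
  have power : r ^ (2 * s + 1) = r ^ (2 * s - 1) * r ^ 2 := by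
    rw [← Real.rpow_ofNat, ← Real.rpow_add hr]
    ring_nf
  rw [tpDensity_eq hxy, tpDensity_swap_eq hxy, tpDensity_eq hxy, tpDensity_swap_eq hxy]
  calc ‖Dg γ u y - Dg γ u x‖ ^ 2 * (‖deriv γ x‖ * ‖deriv γ y‖) / r ^ (2 * s - 1)
      = r ^ 2 * ‖Dg γ u y - Dg γ u x‖ ^ 2 *
          (‖deriv γ x‖ * ‖deriv γ y‖ / r ^ (2 * s + 1)) := by
        rw [power]
        field_simp
    _ ≤ _ := mul_le_mul_of_nonneg_right chord_bound (by positivity)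
    _ = _ := by ring

lemma norm_Dg_sub_sq_div_rpow_le (hγ : IsImmersedLoop γ) (hxy : γ x ≠ γ y)
    (aligned : ForwardChord γ x y ∨ ForwardChord γ y x) :
    ‖Dg γ u y - Dg γ u x‖ ^ 2 * (‖deriv γ x‖ * ‖deriv γ y‖) / ‖γ y - γ x‖ ^ (2 * s - 1) ≤
      16 * (tpDensity s γ u x y + tpDensity s γ u y x) +
        32 * (‖u y - u x‖ ^ 2 / ‖γ y - γ x‖ ^ 2) *
          (tpDensity s γ γ x y + tpDensity s γ γ y x) := by
  rcases aligned with forward | backward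
  · exact hγ.norm_Dg_sub_sq_div_rpow_le_of_forwardChord hxy forward
  · rw [norm_sub_rev (Dg γ u y), norm_sub_rev (γ y), norm_sub_rev (u y), mul_comm ‖deriv γ x‖,
      add_comm (tpDensity s γ u x y), add_comm (tpDensity s γ γ x y)]
    exact hγ.norm_Dg_sub_sq_div_rpow_le_of_forwardChord hxy.symm backward

lemma gagGammaDensity_le_of_not_forwardChord (hγ : IsImmersedLoop γ) (hs : 3 / 2 < s)
    (hE : EtpE s γ ≠ ∞) (hxy : γ x ≠ γ y) (not_forward : ¬ ForwardChord γ x y)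
    (not_backward : ¬ ForwardChord γ y x) :
    gagGammaDensity s γ u x y ≤
      2 * (tangentHolderConst s * Etp s γ) ^ ((s - 3 / 2 + 1) / (s - 3 / 2)) *
        ((‖Dg γ u x‖ ^ 2 + ‖Dg γ u y‖ ^ 2) * (‖deriv γ x‖ * ‖deriv γ y‖)) := by
  have far := hγ.one_le_mul_arcDist_rpow hs hE hxy not_forward not_backward
  have hd : 0 < arcDist γ x y :=
    (norm_sub_pos_iff.2 hxy.symm).trans_le (hγ.norm_sub_le_arcDist x y)
  rw [gagGammaDensity_eq hd, div_le_iff₀ (by positivity)]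
  calc ‖Dg γ u y - Dg γ u x‖ ^ 2 * (‖deriv γ x‖ * ‖deriv γ y‖)
      ≤ 2 * (‖Dg γ u y‖ ^ 2 + ‖Dg γ u x‖ ^ 2) * (‖deriv γ x‖ * ‖deriv γ y‖) := by
        gcongr
        exact norm_sub_sq_le_two_mul _ _
    _ ≤ 2 * (‖Dg γ u y‖ ^ 2 + ‖Dg γ u x‖ ^ 2) * (‖deriv γ x‖ * ‖deriv γ y‖) * _ :=
        le_mul_of_one_le_right (by positivity) far
    _ = _ := by ring

lemma gagGammaDensity_le (hγ : IsImmersedLoop γ) (hs : 3 / 2 < s) (hE : EtpE s γ ≠ ∞)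
    (hxy : γ x ≠ γ y) :
    gagGammaDensity s γ u x y ≤ gagGammaMajorant s γ u x y + gagGammaMajorant s γ u y x := by
  have hd := hγ.norm_sub_le_arcDist x y
  have hr : 0 < ‖γ y - γ x‖ := norm_sub_pos_iff.2 hxy.symm
  have hK : 0 ≤ (tangentHolderConst s * Etp s γ) ^ ((s - 3 / 2 + 1) / (s - 3 / 2)) :=
    Real.rpow_nonneg (mul_nonneg (tangentHolderConst_pos hs).le ENNReal.toReal_nonneg) _
  rw [gagGammaMajorant, gagGammaMajorant, norm_sub_rev (u x), norm_sub_rev (γ x)]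
  by_cases aligned : ForwardChord γ x y ∨ ForwardChord γ y x
  · have chord_bound := hγ.norm_Dg_sub_sq_div_rpow_le (s := s) (u := u) hxy aligned
    have density_le := (gagGammaDensity_eq (s := s) (u := u) (hr.trans_le hd)).trans_le
      (div_le_div_of_nonneg_left (by positivity) (by positivity)
        (Real.rpow_le_rpow hr.le hd (by linarith)))
    have far_nonneg : ∀ z w, 0 ≤ 2 * (tangentHolderConst s * Etp s γ) ^
        ((s - 3 / 2 + 1) / (s - 3 / 2)) * (‖Dg γ u z‖ ^ 2 * ‖deriv γ z‖ * ‖deriv γ w‖) :=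
      fun z w => by positivity
    linarith [far_nonneg x y, far_nonneg y x]
  · rw [not_or] at aligned
    have far_bound := hγ.gagGammaDensity_le_of_not_forwardChord (u := u) hs hE hxy
      aligned.1 aligned.2
    have near_nonneg : ∀ z w, 0 ≤ 16 * tpDensity s γ u z w +
        32 * (‖u y - u x‖ ^ 2 / ‖γ y - γ x‖ ^ 2 * tpDensity s γ γ z w) := fun z w => by
      have := tpDensity_nonneg s γ u z w
      have := tpDensity_nonneg s γ γ z w
      positivity
    linarith [near_nonneg x y, near_nonneg y x]

end IsImmersedLoop

lemma InM.gagGammaDensity_le (hγ : InM s γ) (hu : Function.Periodic u 1) (hs : 3 / 2 < s)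
    (x y : ℝ) :
    gagGammaDensity s γ u x y ≤ gagGammaMajorant s γ u x y + gagGammaMajorant s γ u y x := by
  have immersed := hγ.isImmersedLoop
  by_cases hxy : γ x = γ y
  · obtain ⟨k, hk⟩ := exists_intCast_of_eq hγ.1.1 hγ.2.1 hxy
    have Dg_eq : Dg γ u x = Dg γ u y := by
      rw [← periodic_add_intCast (immersed.periodic_Dg hu) y k, ← hk, add_sub_cancel]
    rw [gagGammaDensity, Dg_eq, sub_self, norm_zero, zero_pow two_ne_zero, zero_div, zero_mul]
    exact add_nonneg (gagGammaMajorant_nonneg hs γ u x y) (gagGammaMajorant_nonneg hs γ u y x)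
  · exact immersed.gagGammaDensity_le hs (hγ.EtpE_ne_top (by linarith)) hxy

end PointwiseBounds

section Coercivity

variable {n : ℕ} {s : ℝ} {γ u : ℝ → En n}

lemma B1_self_eq_integral_tpDensity (s : ℝ) (γ u : ℝ → En n) :
    B1 s γ u u = ∫ x in I01, ∫ y in I01, tpDensity s γ u x y := by
  simp only [B1, real_inner_self_eq_norm_sq, tpDensity]

lemma B2_self_eq_integral_tpDensity (s : ℝ) (γ u : ℝ → En n) :
    B2 s γ u u = ∫ x in I01, ∫ y in I01,
      ‖u y - u x‖ ^ 2 / ‖γ y - γ x‖ ^ 2 * tpDensity s γ γ x y := by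
  simp only [B2, real_inner_self_eq_norm_sq, tpDensity, mul_assoc, mul_left_comm]

lemma B1_self_nonneg (s : ℝ) (γ u : ℝ → En n) : 0 ≤ B1 s γ u u := by
  rw [B1_self_eq_integral_tpDensity]
  exact integral_nonneg fun x => integral_nonneg fun y => tpDensity_nonneg s γ u x y

lemma B2_self_nonneg (s : ℝ) (γ u : ℝ → En n) : 0 ≤ B2 s γ u u := by
  rw [B2_self_eq_integral_tpDensity]
  exact integral_nonneg fun x => integral_nonneg fun y =>
    mul_nonneg (by positivity) (tpDensity_nonneg s γ γ x y)

lemma B3_self_nonneg (s : ℝ) (γ u : ℝ → En n) : 0 ≤ B3 s γ u u :=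
  integral_nonneg fun x => integral_nonneg fun y =>
    mul_nonneg (mul_nonneg (sq_nonneg _)
      (add_nonneg real_inner_self_nonneg real_inner_self_nonneg)) (muW_nonneg γ x y)

lemma innerL2g_self_nonneg (γ u : ℝ → En n) : 0 ≤ innerL2g γ u u :=
  integral_nonneg fun _ => mul_nonneg real_inner_self_nonneg (norm_nonneg _)

lemma innerH1g_self_nonneg (γ u : ℝ → En n) : 0 ≤ innerH1g γ u u :=
  integral_nonneg fun _ => mul_nonneg real_inner_self_nonneg (norm_nonneg _)

lemma arcLen_nonneg (γ : ℝ → En n) : 0 ≤ arcLen γ := integral_nonneg fun _ => norm_nonneg _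

lemma IsImmersedLoop.integrable_norm_Dg_sq_mul (hγ : IsImmersedLoop γ)
    (hu : Continuous (deriv u)) :
    Integrable (Function.uncurry fun x y => ‖Dg γ u x‖ ^ 2 * ‖deriv γ x‖ * ‖deriv γ y‖)
      (circleMeasure.prod circleMeasure) := by
  have integrable_of_continuous : ∀ g : ℝ → ℝ, Continuous g → Integrable g circleMeasure :=
    fun g hg => (hg.integrableOn_Icc (a := 0) (b := 1)).mono_set Ico_subset_Icc_self
  have := hγ.continuous_Dg hu
  have := hγ.continuous_deriv
  exact (integrable_of_continuous (fun x => ‖Dg γ u x‖ ^ 2 * ‖deriv γ x‖) (by fun_prop)).mul_prod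
    (integrable_of_continuous (fun y => ‖deriv γ y‖) (by fun_prop))

lemma integral_norm_Dg_sq_mul (γ u : ℝ → En n) :
    ∫ x in I01, ∫ y in I01, ‖Dg γ u x‖ ^ 2 * ‖deriv γ x‖ * ‖deriv γ y‖ =
      innerH1g γ u u * arcLen γ := by
  simp only [integral_const_mul, integral_mul_const, innerH1g, arcLen, real_inner_self_eq_norm_sq]

namespace InM

lemma integrable_gagGammaMajorant (hγ : InM s γ) (hu : InHs s u) (hs : 1 ≤ s) :
    Integrable (Function.uncurry (gagGammaMajorant s γ u))
      (circleMeasure.prod circleMeasure) :=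
  (((hγ.integrable_tpDensity hu hs).const_mul 16).add
    ((hγ.integrable_increment_ratio_mul_tpDensity hu hs).const_mul 32)).add
    ((hγ.isImmersedLoop.integrable_norm_Dg_sq_mul (hu.2.1.continuous_deriv le_rfl)).const_mul _)

lemma integral_gagGammaMajorant (hγ : InM s γ) (hu : InHs s u) (hs : 1 ≤ s) :
    ∫ x in I01, ∫ y in I01, gagGammaMajorant s γ u x y =
      16 * B1 s γ u u + 32 * B2 s γ u u +
        2 * (tangentHolderConst s * Etp s γ) ^ ((s - 3 / 2 + 1) / (s - 3 / 2)) *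
          (innerH1g γ u u * arcLen γ) := by
  have tp := (hγ.integrable_tpDensity hu hs).const_mul 16
  have ratio := (hγ.integrable_increment_ratio_mul_tpDensity hu hs).const_mul 32
  have far := (hγ.isImmersedLoop.integrable_norm_Dg_sq_mul
    (hu.2.1.continuous_deriv le_rfl)).const_mul
      (2 * (tangentHolderConst s * Etp s γ) ^ ((s - 3 / 2 + 1) / (s - 3 / 2)))
  refine (integral_integral_add' (tp.add ratio) far).trans ?_
  refine (congrArg (· + _) (integral_integral_add' tp ratio)).trans ?_
  simp only [Function.uncurry_apply_pair, integral_const_mul, B1_self_eq_integral_tpDensity,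
    B2_self_eq_integral_tpDensity, ← integral_norm_Dg_sq_mul]

lemma gagGammaSq_le (hγ : InM s γ) (hu : InHs s u) (hs : 3 / 2 < s) :
    gagGammaSq s γ u ≤ 32 * B1 s γ u u + 64 * B2 s γ u u +
      4 * (tangentHolderConst s * Etp s γ) ^ ((s - 3 / 2 + 1) / (s - 3 / 2)) *
        (innerH1g γ u u * arcLen γ) := by
  have hs1 : 1 ≤ s := by linarith
  refine ENNReal.toReal_le_of_le_ofReal ?_
    ((lintegral_lintegral_ofReal_le_of_le_add_swap (hγ.integrable_gagGammaMajorant hu hs1)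
      (gagGammaMajorant_nonneg hs γ u) (hγ.gagGammaDensity_le hu.1 hs)).trans_eq ?_)
  · have := B1_self_nonneg s γ u
    have := B2_self_nonneg s γ u
    have := innerH1g_self_nonneg γ u
    have := arcLen_nonneg γ
    have := tangentHolderConst_pos hs
    have : 0 ≤ Etp s γ := ENNReal.toReal_nonneg
    positivity
  · rw [hγ.integral_gagGammaMajorant hu hs1]
    ring_nf

end InM

lemma HsGammaNorm_le_of_gagGammaSq_le (hs : 3 / 2 ≤ s) {M : ℝ} (hM : 0 ≤ M)
    (hgag : gagGammaSq s γ u ≤ 32 * B1 s γ u u + 128 * B2 s γ u u + M * innerH1g γ u u) :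
    HsGammaNorm s γ u ≤ Real.sqrt (32 + M) * Real.sqrt (Gmet s γ u u) := by
  have B1_nonneg := B1_self_nonneg s γ u
  have B2_nonneg := B2_self_nonneg s γ u
  have B3_nonneg := B3_self_nonneg s γ u
  have L2_nonneg := innerL2g_self_nonneg γ u
  have H1_nonneg := innerH1g_self_nonneg γ u
  have four_B2_le : 4 * B2 s γ u u ≤ (2 * s + 1) * B2 s γ u u := by
    gcongr
    linarith
  have H1_le : innerH1g γ u u ≤ Gmet s γ u u := by
    unfold Gmet
    linarith
  rw [HsGammaNorm, ← Real.sqrt_mul (by positivity), HsGammaNormSq]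
  refine Real.sqrt_le_sqrt ?_
  calc innerL2g γ u u + innerH1g γ u u + gagGammaSq s γ u
      ≤ 32 * Gmet s γ u u + M * innerH1g γ u u := by
        unfold Gmet
        linarith
    _ ≤ (32 + M) * Gmet s γ u u := by
        rw [add_mul]
        gcongr

end Coercivity

/-- coercivity estimate: for `s ∈ (3/2,2)` and `α = s - 3/2` there
is `0 < C < ∞`, depending only on `s`, such that for all `γ ∈ 𝓜` and `u ∈ H^s(𝕋,ℝⁿ)`:
`[u]²_{H^s(γ)} ≤ 32·B¹_γ(u,u) + 128·B²_γ(u,u) + C·L(γ)·E(γ)^{(α+1)/α}·⟨u,u⟩_{H¹(γ)}`, and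
`‖u‖_{H^s(γ)} ≤ √(32 + C·L(γ)·E(γ)^{(α+1)/α}) · √(G_γ(u,u))`. -/
theorem statement8 (s : ℝ) (hs : s ∈ Set.Ioo (3 / 2 : ℝ) 2) :
    ∃ C : ℝ, 0 < C ∧ ∀ (n : ℕ), 2 ≤ n → ∀ γ u : ℝ → En n, InM s γ → InHs s u →
      gagGammaSq s γ u ≤
          32 * B1 s γ u u + 128 * B2 s γ u u +
            C * arcLen γ * Etp s γ ^ ((s - 3 / 2 + 1) / (s - 3 / 2)) * innerH1g γ u u ∧
      HsGammaNorm s γ u ≤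
          Real.sqrt (32 + C * arcLen γ * Etp s γ ^ ((s - 3 / 2 + 1) / (s - 3 / 2))) *
            Real.sqrt (Gmet s γ u u) := by
  have hs' : 3 / 2 < s := hs.1
  have const_pos := tangentHolderConst_pos hs'
  refine ⟨4 * tangentHolderConst s ^ ((s - 3 / 2 + 1) / (s - 3 / 2)), by positivity,
    fun n _ γ u hγ hu => ?_⟩
  have energy_nonneg : 0 ≤ Etp s γ := ENNReal.toReal_nonneg
  have length_nonneg := arcLen_nonneg γ
  have B2_nonneg := B2_self_nonneg s γ u
  have coercive := hγ.gagGammaSq_le hu hs'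
  rw [Real.mul_rpow const_pos.le energy_nonneg] at coercive
  have first : gagGammaSq s γ u ≤ 32 * B1 s γ u u + 128 * B2 s γ u u +
      4 * tangentHolderConst s ^ ((s - 3 / 2 + 1) / (s - 3 / 2)) * arcLen γ *
        Etp s γ ^ ((s - 3 / 2 + 1) / (s - 3 / 2)) * innerH1g γ u u := by
    linarith
  exact ⟨first, HsGammaNorm_le_of_gagGammaSq_le hs'.le (by positivity) first⟩
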